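/- arXiv:1503.04038 — 2 statements merged into one kernel-verified Lean document; each statement's English description precedes it below -/
import Mathlib

section
/- Fix positive real numbers α and β. The following are equivalent: (i) αβ ≤ 1; (ii) every f ∈ L¹(ℝ, ℂ) satisfying ∫_ℝ e^{iπαmt} f(t) dt = 0 for all m ∈ ℤ and ∫_ℝ e^{−iπβn/t} f(t) dt = 0 for all n ∈ ℤ vanishes almost everywhere on ℝ. -/
open MeasureTheory Real

/-!
After scaling, the exponentials of the first arm are the characters of `ℝ / 2ℤ`, so orthogonality
to them says that the `2`-periodization of `F` vanishes; orthogonality to the second arm says the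
same of the pullback of `F` under the inversion `x ↦ c / x`, where `c = -αβ`. Hence the sum `w` of
the absolute values of `F` and of its pullback is an integrable density, invariant under the
inversion and bounded on `(-1, 1)` by the remaining terms of its own periodization. The densities
`a / |1 - x²|` equal the remaining terms of their periodization and, for `|c| = 1`, are invariant
under the inversion too, but they have infinite mass at the cusps `±1`.

For `αβ < 1` the inversion maps `{|x| > 1}` into `(-1, 1)` with room to spare, and comparing masses
gives `w ≤ a / |1 - x²|` for every `a > 0`. For `αβ = 1` the comparison instead shows that
`{w ≥ a / |1 - x²|}` is preserved by the parabolic map `t ↦ 1 / (2 - t)`, a unit translation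
in the coordinate at the cusp `1`; by finiteness of the mass of `w` this set is null. Either way
`w = 0`. For `αβ > 1` the difference of two Cauchy densities is a counterexample.
-/

open Filter Set Topology
open scoped BoundedContinuousFunction ENNReal NNReal

section Periodization

variable {E : Type*}

/-- The `T`-periodization `t ↦ ∑ j, g (t + j T)` of a function on the real line. -/
noncomputable def periodization [AddCommMonoid E] [TopologicalSpace E] (T : ℝ) (g : ℝ → E)
    (t : ℝ) : E :=
  ∑' j : ℤ, g (t + j * T)

lemma periodic_periodization [AddCommMonoid E] [TopologicalSpace E] (T : ℝ) (g : ℝ → E) :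
    Function.Periodic (periodization T g) T := fun t ↦ by
  rw [periodization, periodization, ← (Equiv.addRight (1 : ℤ)).tsum_eq fun j ↦ g (t + j * T)]
  refine tsum_congr fun j ↦ congrArg g ?_
  simp only [Equiv.coe_addRight]
  push_cast
  ring

lemma periodization_addCircle_mul {T : ℝ} (ψ : AddCircle T → ℂ) (F : ℝ → ℂ) (t : ℝ) :
    periodization T (fun x ↦ ψ x * F x) t = ψ t * periodization T F t := by
  have ht : ∀ j : ℤ, ((t + j * T : ℝ) : AddCircle T) = t := fun j ↦ by
    rw [← zsmul_eq_mul]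
    simp
  simp only [periodization, ht, tsum_mul_left]

lemma sum_map_add_right_restrict_Ioc {T : ℝ} (hT : 0 < T) (a : ℝ) :
    Measure.sum (fun j : ℤ ↦ (volume.restrict (Ioc a (a + T))).map (· + j * T)) = volume := by
  have hmap : ∀ j : ℤ, (volume.restrict (Ioc a (a + T))).map (· + j * T)
      = volume.restrict (Ioc (a + j • T) (a + (j + 1) • T)) := fun j ↦ by
    have hpre : (· + j * T) ⁻¹' Ioc (a + j • T) (a + (j + 1) • T) = Ioc a (a + T) := by
      rw [preimage_add_const_Ioc]
      congr 1 <;> simp only [zsmul_eq_mul] <;> push_cast <;> ring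
    rw [← hpre]
    exact ((measurePreserving_add_right volume (j * T)).restrict_preimage measurableSet_Ioc).map_eq
  simp_rw [hmap]
  rw [← Measure.restrict_iUnion (pairwise_disjoint_Ioc_add_zsmul a T) fun _ ↦ measurableSet_Ioc,
    iUnion_Ioc_add_zsmul hT, Measure.restrict_univ]

lemma lintegral_periodization {T : ℝ} (hT : 0 < T) {g : ℝ → ℝ≥0∞} (hg : Measurable g) (a : ℝ) :
    ∫⁻ t in Ioc a (a + T), periodization T g t = ∫⁻ x, g x := by
  simp only [periodization]
  rw [lintegral_tsum fun j ↦ by fun_prop]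
  conv_rhs => rw [← sum_map_add_right_restrict_Ioc hT a, lintegral_sum_measure]
  exact tsum_congr fun j ↦ (lintegral_map hg (by fun_prop)).symm

lemma ae_periodization_ne_top {T : ℝ} (hT : 0 < T) {g : ℝ → ℝ≥0∞} (hg : Measurable g)
    (hfin : ∫⁻ x, g x ≠ ∞) : ∀ᵐ t : ℝ, periodization T g t ≠ ∞ := by
  have hm : Measurable (periodization T g) := Measurable.tsum fun j ↦ by fun_prop
  rw [← Measure.restrict_univ (μ := volume), ← iUnion_Ioc_add_zsmul hT (0 : ℝ),
    ae_restrict_iUnion_iff]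
  intro i
  have hi : (0 : ℝ) + (i + 1) • T = 0 + i • T + T := by rw [add_zsmul, one_zsmul, add_assoc]
  rw [hi]
  have hlt := ae_lt_top hm ((lintegral_periodization hT hg (0 + i • T)).symm ▸ hfin)
  exact hlt.mono fun t ht ↦ ht.ne

variable [NormedAddCommGroup E]

lemma integrableOn_periodization [MeasurableSpace E] [BorelSpace E] [SecondCountableTopology E]
    [CompleteSpace E] {T : ℝ} (hT : 0 < T) {g : ℝ → E} (hgm : Measurable g) (hg : Integrable g)
    (a : ℝ) : IntegrableOn (periodization T g) (Ioc a (a + T)) := by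
  refine ⟨(Measurable.tsum fun j ↦ by fun_prop).aestronglyMeasurable, ?_⟩
  calc ∫⁻ t in Ioc a (a + T), ‖periodization T g t‖ₑ
      ≤ ∫⁻ t in Ioc a (a + T), periodization T (‖g ·‖ₑ) t :=
        lintegral_mono fun _ ↦ enorm_tsum_le_tsum_enorm
    _ = ∫⁻ x, ‖g x‖ₑ := lintegral_periodization hT hgm.enorm a
    _ < ∞ := hg.2

lemma integral_periodization [NormedSpace ℝ E] {T : ℝ} (hT : 0 < T) {g : ℝ → E}
    (hg : Integrable g) (a : ℝ) : ∫ t in Ioc a (a + T), periodization T g t = ∫ x, g x := by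
  simp only [periodization]
  have hsum := sum_map_add_right_restrict_Ioc hT a
  have hemb : ∀ j : ℤ, MeasurableEmbedding fun t : ℝ ↦ t + j * T :=
    fun j ↦ measurableEmbedding_addRight _
  rw [integral_tsum fun j : ℤ ↦ (hg.comp_add_right (j * T)).1.restrict]
  · conv_rhs => rw [← hsum, integral_sum_measure (hsum.symm ▸ hg)]
    exact tsum_congr fun j ↦ ((hemb j).integral_map g).symm
  · rw [tsum_congr fun j ↦ ((hemb j).lintegral_map (‖g ·‖ₑ)).symm, ← lintegral_sum_measure, hsum]
    exact hg.2.ne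

end Periodization

section Fourier

lemma ae_eq_zero_of_forall_integral_boundedContinuous_smul_eq_zero {X E : Type*}
    [PseudoEMetricSpace X] [MeasurableSpace X] [BorelSpace X] [NormedAddCommGroup E]
    [NormedSpace ℝ E] [CompleteSpace E] {μ : Measure X} {f : X → E} (hf : Integrable f μ)
    (h : ∀ ψ : X →ᵇ ℝ≥0, ∫ x, (ψ x : ℝ) • f x ∂μ = 0) : f =ᵐ[μ] 0 := by
  refine ae_eq_zero_of_forall_setIntegral_isClosed_eq_zero hf fun s hs ↦ ?_
  let ψ (n : ℕ) : X →ᵇ ℝ≥0 := thickenedIndicator (δ := 1 / ((n : ℝ) + 1)) Nat.one_div_pos_of_nat s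
  have hψ : ∀ x, Tendsto (fun n ↦ (ψ n x : ℝ) • f x) atTop (𝓝 (s.indicator f x)) := fun x ↦ by
    have hlim := tendsto_pi_nhds.1 (thickenedIndicator_tendsto_indicator_closure
      (fun n : ℕ ↦ Nat.one_div_pos_of_nat) tendsto_one_div_add_atTop_nhds_zero_nat s) x
    convert (NNReal.tendsto_coe.2 hlim).smul_const (f x) using 2
    by_cases hx : x ∈ s <;> simp [hx]
  have hlim : Tendsto (fun n ↦ ∫ x, (ψ n x : ℝ) • f x ∂μ) atTop (𝓝 (∫ x, s.indicator f x ∂μ)) := by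
    refine tendsto_integral_of_dominated_convergence (‖f ·‖) (fun n ↦ ?_) hf.norm
      (fun n ↦ .of_forall fun x ↦ ?_) (.of_forall hψ)
    · exact (NNReal.continuous_coe.comp (ψ n).continuous).aestronglyMeasurable.smul hf.1
    · rw [norm_smul, NNReal.norm_eq]
      exact mul_le_of_le_one_left (norm_nonneg _) (thickenedIndicator_le_one _ s x)
  rw [← integral_indicator hs.measurableSet]
  exact tendsto_nhds_unique hlim (by simp only [h, tendsto_const_nhds])

variable {T : ℝ} [hT : Fact (0 < T)] {E : Type*} [NormedAddCommGroup E] [NormedSpace ℂ E]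

lemma integral_smul_eq_zero_of_fourierCoeff_eq_zero {f : AddCircle T → E}
    (hf : Integrable f AddCircle.haarAddCircle) (h : ∀ n, fourierCoeff f n = 0)
    (ψ : C(AddCircle T, ℂ)) : ∫ x, ψ x • f x ∂AddCircle.haarAddCircle = 0 := by
  have hint : ∀ ψ : C(AddCircle T, ℂ), Integrable (fun x ↦ ψ x • f x) AddCircle.haarAddCircle :=
    fun ψ ↦ hf.bdd_smul _ ψ.continuous.aestronglyMeasurable (.of_forall ψ.norm_coe_le_norm)
  let L : C(AddCircle T, ℂ) →ₗ[ℂ] E :=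
    { toFun := fun ψ ↦ ∫ x, ψ x • f x ∂AddCircle.haarAddCircle
      map_add' := fun ψ₁ ψ₂ ↦ by
        simp only [ContinuousMap.add_apply, add_smul]
        exact integral_add (hint ψ₁) (hint ψ₂)
      map_smul' := fun a ψ ↦ by
        simp only [ContinuousMap.smul_apply, smul_assoc, RingHom.id_apply]
        exact integral_smul a _ }
  let L' : C(AddCircle T, ℂ) →L[ℂ] E :=
    L.mkContinuous (∫ x, ‖f x‖ ∂AddCircle.haarAddCircle) fun ψ ↦ by
      rw [mul_comm, ← integral_const_mul]
      refine norm_integral_le_of_norm_le (hf.norm.const_mul _) (.of_forall fun x ↦ ?_)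
      rw [norm_smul]
      gcongr
      exact ψ.norm_coe_le_norm x
  have hL' : L' = 0 := by
    refine ContinuousLinearMap.ext_on (s := range (@fourier T)) ?_ ?_
    · rw [Submodule.dense_iff_topologicalClosure_eq_top, span_fourier_closure_eq_top]
    · rintro _ ⟨n, rfl⟩
      have hn := h (-n)
      rw [fourierCoeff, neg_neg] at hn
      exact hn
  exact congrArg (· ψ) hL'

lemma ae_eq_zero_of_fourierCoeff_eq_zero [CompleteSpace E] {f : AddCircle T → E}
    (hf : Integrable f AddCircle.haarAddCircle) (h : ∀ n, fourierCoeff f n = 0) :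
    f =ᵐ[AddCircle.haarAddCircle] 0 := by
  refine ae_eq_zero_of_forall_integral_boundedContinuous_smul_eq_zero hf fun ψ ↦ ?_
  exact integral_smul_eq_zero_of_fourierCoeff_eq_zero hf h ⟨fun x ↦ ((ψ x : ℝ) : ℂ), by fun_prop⟩

lemma integrable_addCircle_mul (ψ : C(AddCircle T, ℂ)) {F : ℝ → ℂ} (hF : Integrable F) :
    Integrable fun t : ℝ ↦ ψ t * F t :=
  hF.bdd_mul (ψ.continuous.comp (AddCircle.continuous_mk' T)).aestronglyMeasurable
    (.of_forall fun _ ↦ ψ.norm_coe_le_norm _)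

lemma ae_periodization_eq_zero {F : ℝ → ℂ} (hFm : Measurable F) (hF : Integrable F)
    (h : ∀ n : ℤ, ∫ t : ℝ, fourier n (t : AddCircle T) * F t = 0) (a : ℝ) :
    ∀ᵐ t ∂volume.restrict (Ioc a (a + T)), periodization T F t = 0 := by
  let P : AddCircle T → ℂ := (periodic_periodization T F).lift
  have hPcoe : ∀ t : ℝ, P t = periodization T F t := (periodic_periodization T F).lift_coe
  have hmk := AddCircle.measurePreserving_mk T a
  have hPm : Measurable P := QuotientAddGroup.measurable_from_quotient.2
    (Measurable.tsum fun j ↦ by fun_prop : Measurable (periodization T F))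
  have hP : Integrable P := (hmk.integrable_comp hPm.aestronglyMeasurable).1
    (integrableOn_periodization hT.out hFm hF a)
  have hcoeff : ∀ n, fourierCoeff P n = 0 := fun n ↦ by
    rw [fourierCoeff_eq_intervalIntegral P n a,
      intervalIntegral.integral_of_le (by linarith [hT.out])]
    simp only [hPcoe, smul_eq_mul, ← periodization_addCircle_mul]
    rw [integral_periodization hT.out (integrable_addCircle_mul _ hF), h, smul_zero]
  have hP0 := ae_eq_zero_of_fourierCoeff_eq_zero
    (memLp_one_iff_integrable.1 (memLp_one_iff_integrable.2 hP).haarAddCircle) hcoeff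
  have hvol : (volume : Measure (AddCircle T)) ≪ AddCircle.haarAddCircle := by
    rw [AddCircle.volume_eq_smul_haarAddCircle]
    exact Measure.smul_absolutelyContinuous
  exact hmk.quasiMeasurePreserving.ae (hvol.ae_le hP0)

end Fourier

section PuncturedPeriodization

variable {T : ℝ}

/-- The sum `∑ j ≠ 0, g (t + j T)`: the `T`-periodization without its central term, which
dominates the norm of a function whose full periodization vanishes. -/
noncomputable def puncturedPeriodization (T : ℝ) (g : ℝ → ℝ≥0∞) (t : ℝ) : ℝ≥0∞ :=
  ∑' j : ({0}ᶜ : Set ℤ), g (t + j * T)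

lemma puncturedPeriodization_mono {g₁ g₂ : ℝ → ℝ≥0∞} (h : g₁ ≤ g₂) :
    puncturedPeriodization T g₁ ≤ puncturedPeriodization T g₂ :=
  fun _ ↦ ENNReal.tsum_le_tsum fun _ ↦ h _

lemma puncturedPeriodization_add (g₁ g₂ : ℝ → ℝ≥0∞) :
    puncturedPeriodization T (g₁ + g₂)
      = puncturedPeriodization T g₁ + puncturedPeriodization T g₂ :=
  funext fun _ ↦ ENNReal.tsum_add

lemma puncturedPeriodization_eq_tsum_nat (g : ℝ → ℝ≥0∞) (t : ℝ) :
    puncturedPeriodization T g t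
      = ∑' n : ℕ, g (t + (n + 1) * T) + ∑' n : ℕ, g (t - (n + 1) * T) := by
  rw [puncturedPeriodization, tsum_subtype ({0}ᶜ) fun j : ℤ ↦ g (t + j * T),
    tsum_of_add_one_of_neg_add_one ENNReal.summable ENNReal.summable,
    indicator_of_notMem (by simp), add_zero]
  congr 1 <;> refine tsum_congr fun n ↦ ?_
  · rw [indicator_of_mem (by simp; lia)]
    push_cast
    rfl
  · rw [indicator_of_mem (by simp; lia)]
    push_cast
    congr 1
    ring

lemma lintegral_puncturedPeriodization (hT : 0 < T) {g : ℝ → ℝ≥0∞} (hg : Measurable g) (a : ℝ) :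
    ∫⁻ t in Ioc a (a + T), puncturedPeriodization T g t = ∫⁻ x in (Ioc a (a + T))ᶜ, g x := by
  rw [← lintegral_indicator measurableSet_Ioc.compl,
    ← lintegral_periodization hT (hg.indicator measurableSet_Ioc.compl) a]
  refine setLIntegral_congr_fun measurableSet_Ioc fun t ht ↦ ?_
  simp only [puncturedPeriodization, periodization, tsum_subtype ({0}ᶜ) fun j : ℤ ↦ g (t + j * T)]
  refine tsum_congr fun j ↦ ?_
  have hj : t + j * T ∈ (Ioc a (a + T))ᶜ ↔ j ∈ ({0}ᶜ : Set ℤ) := by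
    refine not_congr ⟨fun hmem ↦ ?_, fun h0 ↦ by simpa [mem_singleton_iff.1 h0] using ht⟩
    exact (existsUnique_add_zsmul_mem_Ioc hT t a).unique (by simpa using hmem) (by simpa using ht)
  simp only [indicator, hj]

lemma lintegral_Ioo_puncturedPeriodization_two {g : ℝ → ℝ≥0∞} (hg : Measurable g) :
    ∫⁻ t in Ioo (-1) 1, puncturedPeriodization 2 g t = ∫⁻ x in {x : ℝ | 1 < |x|}, g x := by
  have hIcc : {x : ℝ | 1 < |x|} = (Icc (-1) 1)ᶜ := by
    ext x
    simp [← abs_le]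
  have hend : (-1 : ℝ) + 2 = 1 := by norm_num
  have h := lintegral_puncturedPeriodization two_pos hg (-1)
  rw [hend] at h
  rw [restrict_Ioo_eq_restrict_Ioc, h, hIcc]
  exact setLIntegral_congr Ioc_ae_eq_Icc.compl

lemma enorm_le_puncturedPeriodization_of_periodization_eq_zero {E : Type*} [NormedAddCommGroup E]
    [CompleteSpace E] {F : ℝ → E} {t : ℝ} (h : periodization T F t = 0) :
    ‖F t‖ₑ ≤ puncturedPeriodization T (‖F ·‖ₑ) t := by
  by_cases htop : puncturedPeriodization T (‖F ·‖ₑ) t = ∞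
  · exact htop ▸ le_top
  have hsum := (tsum_enorm_ne_top_iff_summable_norm.1 htop).of_norm
  have hsplit := Summable.tsum_add_tsum_compl (f := fun j : ℤ ↦ F (t + j * T)) (s := {0})
    (hasSum_fintype _).summable hsum
  have hF : F t = -∑' j : ({0}ᶜ : Set ℤ), F (t + j * T) := by
    rw [periodization] at h
    rw [h, tsum_singleton 0 fun j : ℤ ↦ F (t + j * T)] at hsplit
    simpa using eq_neg_of_add_eq_zero_left hsplit
  rw [hF, enorm_neg]
  exact enorm_tsum_le_tsum_enorm

end PuncturedPeriodization

section Inversion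

variable {c : ℝ}

lemma involutive_const_div (hc : c ≠ 0) : Function.Involutive fun x : ℝ ↦ c / x :=
  fun _ ↦ div_div_cancel₀ hc

lemma image_const_div_compl_zero (hc : c ≠ 0) : (fun x : ℝ ↦ c / x) '' {0}ᶜ = {0}ᶜ := by
  rw [(involutive_const_div hc).image_eq_preimage_symm]
  ext x
  simp [hc]

lemma hasDerivWithinAt_const_div {x : ℝ} (hx : x ∈ ({0}ᶜ : Set ℝ)) :
    HasDerivWithinAt (fun x ↦ c / x) (-c / x ^ 2) {0}ᶜ x := by
  simpa [div_eq_mul_inv] using ((hasDerivAt_inv hx).const_mul c).hasDerivWithinAt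

lemma abs_neg_div_sq (c x : ℝ) : |-c / x ^ 2| = |c| / x ^ 2 := by
  rw [abs_div, abs_neg, abs_sq]

lemma lintegral_mul_comp_const_div (hc : c ≠ 0) (g : ℝ → ℝ≥0∞) :
    ∫⁻ x, ENNReal.ofReal (|c| / x ^ 2) * g (c / x) = ∫⁻ x, g x := by
  have h := lintegral_image_eq_lintegral_abs_deriv_mul (measurableSet_singleton (0 : ℝ)).compl
    (fun _ ↦ hasDerivWithinAt_const_div) (involutive_const_div hc).injective.injOn g
  simpa only [image_const_div_compl_zero hc, restrict_compl_singleton, abs_neg_div_sq]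
    using h.symm

variable {E : Type*} [NormedAddCommGroup E] [NormedSpace ℝ E]

lemma integral_smul_comp_const_div (hc : c ≠ 0) (g : ℝ → E) :
    ∫ x, (|c| / x ^ 2) • g (c / x) = ∫ x, g x := by
  have h := integral_image_eq_integral_abs_deriv_smul (measurableSet_singleton (0 : ℝ)).compl
    (fun _ ↦ hasDerivWithinAt_const_div) (involutive_const_div hc).injective.injOn g
  simpa only [image_const_div_compl_zero hc, restrict_compl_singleton, abs_neg_div_sq]
    using h.symm

lemma integrable_smul_comp_const_div (hc : c ≠ 0) {g : ℝ → E} (hg : Integrable g) :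
    Integrable fun x ↦ (|c| / x ^ 2) • g (c / x) := by
  have h := integrableOn_image_iff_integrableOn_abs_deriv_smul
    (measurableSet_singleton (0 : ℝ)).compl (fun _ ↦ hasDerivWithinAt_const_div)
    (involutive_const_div hc).injective.injOn g
  simp only [image_const_div_compl_zero hc, IntegrableOn, restrict_compl_singleton,
    abs_neg_div_sq] at h
  exact h.1 hg

lemma ofReal_abs_div_sq_ne_zero (hc : c ≠ 0) {x : ℝ} (hx : x ≠ 0) :
    ENNReal.ofReal (|c| / x ^ 2) ≠ 0 :=
  (ENNReal.ofReal_pos.2 (by positivity)).ne'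

lemma quasiMeasurePreserving_const_div (hc : c ≠ 0) :
    Measure.QuasiMeasurePreserving (fun x : ℝ ↦ c / x) := by
  refine ⟨by fun_prop, .mk fun s hs hs0 ↦ ?_⟩
  have h := lintegral_mul_comp_const_div hc (s.indicator 1)
  rw [lintegral_indicator_one hs, hs0, lintegral_eq_zero_iff
    (by have := measurable_one (α := ℝ≥0∞).indicator hs; fun_prop)] at h
  rw [Measure.map_apply (by fun_prop) hs, measure_eq_zero_iff_ae_notMem]
  filter_upwards [h, Measure.ae_ne volume (0 : ℝ)] with x hx hx0 hxs
  simp only [indicator_of_mem (mem_preimage.1 hxs), Pi.one_apply, mul_one, Pi.zero_apply] at hx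
  exact ofReal_abs_div_sq_ne_zero hc hx0 hx

lemma setLIntegral_one_lt_abs_comp_const_div (hc : c ≠ 0) (g : ℝ → ℝ≥0∞) :
    ∫⁻ x in {x : ℝ | 1 < |x|}, ENNReal.ofReal (|c| / x ^ 2) * g (c / x)
      = ∫⁻ s in Ioo (-|c|) |c|, g s := by
  have hM : MeasurableSet {x : ℝ | 1 < |x|} := measurableSet_lt measurable_const (by fun_prop)
  rw [← lintegral_indicator hM, ← lintegral_indicator measurableSet_Ioo,
    ← lintegral_mul_comp_const_div hc ((Ioo (-|c|) |c|).indicator g)]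
  refine lintegral_congr_ae ?_
  filter_upwards [Measure.ae_ne volume (0 : ℝ)] with x hx
  have hmem : c / x ∈ Ioo (-|c|) |c| ↔ x ∈ {x : ℝ | 1 < |x|} := by
    rw [mem_Ioo, ← abs_lt, abs_div, div_lt_iff₀ (abs_pos.2 hx)]
    exact lt_mul_iff_one_lt_right (abs_pos.2 hc)
  simp only [indicator, hmem, mul_ite, mul_zero]

end Inversion

section CuspDensity

/-- The density `a / |1 - x²|`, with the junk value `0` at `±1`. It has infinite mass at the cusps
`±1`, dominates on `(-1, 1)` the other terms of its `2`-periodization and is invariant under the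
inversions `x ↦ ±1 / x`. -/
noncomputable def cuspDensity (a x : ℝ) : ℝ≥0∞ :=
  ENNReal.ofReal (a / |1 - x ^ 2|)

lemma measurable_cuspDensity (a : ℝ) : Measurable (cuspDensity a) := by
  unfold cuspDensity
  fun_prop

lemma cuspDensity_neg (a x : ℝ) : cuspDensity a (-x) = cuspDensity a x := by
  rw [cuspDensity, neg_sq, cuspDensity]

lemma cuspDensity_lt_cuspDensity {a b x : ℝ} (hb : 0 < b) (hab : a < b) (hx : |x| < 1) :
    cuspDensity a x < cuspDensity b x := by
  have hx2 : 0 < |1 - x ^ 2| := abs_pos.2 (sub_pos.2 ((sq_lt_one_iff_abs_lt_one x).2 hx)).ne'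
  refine (ENNReal.ofReal_lt_ofReal_iff (by positivity)).2 ?_
  gcongr

lemma tendsto_cuspDensity_one_div_add_one (x : ℝ) :
    Tendsto (fun n : ℕ ↦ cuspDensity (1 / ((n : ℝ) + 1)) x) atTop (𝓝 0) := by
  simp only [cuspDensity]
  rw [← ENNReal.ofReal_zero, ← zero_div |1 - x ^ 2|]
  exact ENNReal.tendsto_ofReal (tendsto_one_div_add_atTop_nhds_zero_nat.div_const _)

lemma sum_range_cuspDensity {a s : ℝ} (ha : 0 ≤ a) (hs : -1 < s) (n : ℕ) :
    ∑ k ∈ Finset.range n, cuspDensity a (s + (k + 1) * 2)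
        + ENNReal.ofReal (a / (2 * (1 + s + 2 * n))) = ENNReal.ofReal (a / (2 * (1 + s))) := by
  induction n with
  | zero => simp
  | succ n ih =>
    have h₁ : 0 < 1 + s + 2 * (n : ℝ) := by linarith [n.cast_nonneg (α := ℝ)]
    have h₂ : 0 < 1 + s + 2 * ((n : ℝ) + 1) := by linarith
    have hmul : (s + (n + 1) * 2) ^ 2 - 1 = (1 + s + 2 * n) * (1 + s + 2 * (n + 1)) := by ring
    rw [← ih, Finset.sum_range_succ, add_assoc, cuspDensity, abs_sub_comm, hmul, Nat.cast_succ,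
      abs_of_pos (by positivity), ← ENNReal.ofReal_add (by positivity) (by positivity)]
    congr 2
    field_simp
    ring

lemma tsum_cuspDensity_le {a s : ℝ} (ha : 0 ≤ a) (hs : -1 < s) :
    ∑' k : ℕ, cuspDensity a (s + (k + 1) * 2) ≤ ENNReal.ofReal (a / (2 * (1 + s))) :=
  ENNReal.tsum_le_of_sum_range_le fun n ↦ (sum_range_cuspDensity ha hs n) ▸ le_self_add

lemma puncturedPeriodization_cuspDensity_le {a t : ℝ} (ha : 0 ≤ a) (ht : t ∈ Ioo (-1) 1) :
    puncturedPeriodization 2 (cuspDensity a) t ≤ cuspDensity a t := by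
  have h₁ : 0 < 1 + t := by linarith [ht.1]
  have h₂ : 0 < 1 + -t := by linarith [ht.2]
  have hneg : ∀ n : ℕ, cuspDensity a (t - (n + 1) * 2) = cuspDensity a (-t + (n + 1) * 2) :=
    fun n ↦ by rw [← cuspDensity_neg]; ring_nf
  have hsq : 1 - t ^ 2 = (1 + t) * (1 + -t) := by ring
  rw [puncturedPeriodization_eq_tsum_nat, tsum_congr hneg]
  calc _ ≤ ENNReal.ofReal (a / (2 * (1 + t))) + ENNReal.ofReal (a / (2 * (1 + -t))) :=
        add_le_add (tsum_cuspDensity_le ha ht.1) (tsum_cuspDensity_le ha (by linarith [ht.2]))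
    _ = cuspDensity a t := by
        rw [← ENNReal.ofReal_add (by positivity) (by positivity), cuspDensity, hsq,
          abs_of_pos (by positivity)]
        congr 1
        field_simp
        ring

end CuspDensity

section Subinvariant

/-- The measure with density `w` is invariant under the inversion `x ↦ c / x`. -/
def IsInversionInvariant (c : ℝ) (w : ℝ → ℝ≥0∞) : Prop :=
  ∀ x, x ≠ 0 → ENNReal.ofReal (|c| / x ^ 2) * w (c / x) = w x

/-- An integrable density, invariant under `x ↦ c / x`, which is dominated on `(-1, 1)` by the
other terms of its `2`-periodization. Pulling these back by `x ↦ c / x`, this says that the density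
on `(-1, 1)` is subinvariant under the Gauss-type map `x ↦ c / x` modulo `2`. -/
structure IsSubinvariant (c : ℝ) (w : ℝ → ℝ≥0∞) : Prop where
  measurable : Measurable w
  lintegral_ne_top : ∫⁻ x, w x ≠ ∞
  inversion : IsInversionInvariant c w
  le_puncturedPeriodization :
    ∀ᵐ t ∂volume.restrict (Ioo (-1) 1), w t ≤ puncturedPeriodization 2 w t

variable {c a : ℝ} {w : ℝ → ℝ≥0∞}

lemma ofReal_mul_cuspDensity_const_div {x : ℝ} (hc : c ≠ 0) (hx : x ≠ 0) :
    ENNReal.ofReal (|c| / x ^ 2) * cuspDensity (a / |c|) (c / x)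
      = ENNReal.ofReal (a / |x ^ 2 - c ^ 2|) := by
  have hsub : 1 - (c / x) ^ 2 = (x ^ 2 - c ^ 2) / x ^ 2 := by field_simp
  rw [cuspDensity, ← ENNReal.ofReal_mul (by positivity), hsub, abs_div, abs_sq]
  congr 1
  field_simp

lemma isInversionInvariant_cuspDensity (a : ℝ) (hc : |c| = 1) :
    IsInversionInvariant c (cuspDensity a) := fun x hx ↦ by
  have h := ofReal_mul_cuspDensity_const_div (a := a) (abs_ne_zero.1 (hc ▸ one_ne_zero)) hx
  rwa [hc, div_one, ← sq_abs c, hc, one_pow, abs_sub_comm, ← cuspDensity, ← hc] at h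

lemma ofReal_mul_cuspDensity_const_div_le {x : ℝ} (ha : 0 ≤ a) (hc : c ≠ 0) (hc₁ : |c| ≤ 1)
    (hx : 1 < |x|) :
    ENNReal.ofReal (|c| / x ^ 2) * cuspDensity (a / |c|) (c / x) ≤ cuspDensity a x := by
  have hc₂ : c ^ 2 ≤ 1 := (sq_le_one_iff_abs_le_one c).2 hc₁
  have hx₂ : 1 < x ^ 2 := (one_lt_sq_iff_one_lt_abs x).2 hx
  rw [ofReal_mul_cuspDensity_const_div hc (abs_pos.1 (one_pos.trans hx)), cuspDensity,
    abs_sub_comm 1, abs_of_pos (by linarith), abs_of_pos (by linarith)]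
  exact ENNReal.ofReal_le_ofReal (div_le_div_of_nonneg_left ha (by linarith) (by linarith))

namespace IsInversionInvariant

lemma tsub {w₁ w₂ : ℝ → ℝ≥0∞} (h₁ : IsInversionInvariant c w₁)
    (h₂ : IsInversionInvariant c w₂) : IsInversionInvariant c (w₁ - w₂) := fun x hx ↦ by
  simp only [Pi.sub_apply]
  rw [ENNReal.mul_sub fun _ _ ↦ ENNReal.ofReal_ne_top, h₁ x hx, h₂ x hx]

lemma const_div_le_const_div_iff {w₁ w₂ : ℝ → ℝ≥0∞} (h₁ : IsInversionInvariant c w₁)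
    (h₂ : IsInversionInvariant c w₂) (hc : c ≠ 0) {x : ℝ} (hx : x ≠ 0) :
    w₁ (c / x) ≤ w₂ (c / x) ↔ w₁ x ≤ w₂ x := by
  rw [← h₁ x hx, ← h₂ x hx,
    ENNReal.mul_le_mul_iff_right (ofReal_abs_div_sq_ne_zero hc hx) ENNReal.ofReal_ne_top]

lemma setLIntegral_one_lt_abs (hw : IsInversionInvariant c w) (hc : c ≠ 0) :
    ∫⁻ x in {x : ℝ | 1 < |x|}, w x = ∫⁻ s in Ioo (-|c|) |c|, w s := by
  rw [← setLIntegral_one_lt_abs_comp_const_div hc]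
  exact setLIntegral_congr_fun (measurableSet_lt measurable_const (by fun_prop))
    fun x hx ↦ (hw x (abs_pos.1 (one_pos.trans hx))).symm

lemma lintegral_puncturedPeriodization (hw : IsInversionInvariant c w) (hc : c ≠ 0)
    (hwm : Measurable w) :
    ∫⁻ t in Ioo (-1) 1, puncturedPeriodization 2 w t = ∫⁻ s in Ioo (-|c|) |c|, w s := by
  rw [lintegral_Ioo_puncturedPeriodization_two hwm, hw.setLIntegral_one_lt_abs hc]

end IsInversionInvariant

lemma tsub_cuspDensity_le_puncturedPeriodization {t : ℝ} (ha : 0 ≤ a) (ht : t ∈ Ioo (-1) 1)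
    (h : w t ≤ puncturedPeriodization 2 w t) :
    w t - cuspDensity a t ≤ puncturedPeriodization 2 (w - cuspDensity a) t := by
  rw [tsub_le_iff_right]
  calc w t ≤ puncturedPeriodization 2 w t := h
    _ ≤ puncturedPeriodization 2 ((w - cuspDensity a) + cuspDensity a) t :=
        puncturedPeriodization_mono le_tsub_add t
    _ = puncturedPeriodization 2 (w - cuspDensity a) t
        + puncturedPeriodization 2 (cuspDensity a) t := by rw [puncturedPeriodization_add]; rfl
    _ ≤ _ := by gcongr; exact puncturedPeriodization_cuspDensity_le ha ht

lemma le_of_tsub_eq_tsub_of_lt {x y z : ℝ≥0∞} (hx : x ≠ ∞) (hyz : y < z) (h : x - y = x - z) :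
    x ≤ y := by
  by_contra! hlt
  rcases le_total x z with hxz | hzx
  · rw [tsub_eq_zero_of_le hxz] at h
    exact (tsub_pos_of_lt hlt).ne' h
  · exact hyz.ne ((ENNReal.sub_right_inj hx hlt.le hzx).1 h)

namespace IsSubinvariant

lemma setLIntegral_ne_top (hw : IsSubinvariant c w) (s : Set ℝ) : ∫⁻ x in s, w x ≠ ∞ :=
  ne_top_of_le_ne_top hw.lintegral_ne_top (setLIntegral_le_lintegral _ _)

lemma setLIntegral_tsub_cuspDensity_le (hw : IsSubinvariant c w) (hc : c ≠ 0) (hc₁ : |c| ≤ 1)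
    (ha : 0 ≤ a) :
    ∫⁻ t in Ioo (-1) 1, w t - cuspDensity a t
      ≤ ∫⁻ t in Ioo (-1) 1, w t - cuspDensity (a / |c|) t := by
  calc ∫⁻ t in Ioo (-1) 1, w t - cuspDensity a t
      ≤ ∫⁻ t in Ioo (-1) 1, puncturedPeriodization 2 (w - cuspDensity a) t := by
        refine lintegral_mono_ae ?_
        filter_upwards [hw.le_puncturedPeriodization, ae_restrict_mem measurableSet_Ioo]
          with t ht htI using tsub_cuspDensity_le_puncturedPeriodization ha htI ht
    _ = ∫⁻ x in {x : ℝ | 1 < |x|}, w x - cuspDensity a x :=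
        lintegral_Ioo_puncturedPeriodization_two (hw.measurable.sub (measurable_cuspDensity a))
    _ ≤ ∫⁻ x in {x : ℝ | 1 < |x|},
          ENNReal.ofReal (|c| / x ^ 2) * (w (c / x) - cuspDensity (a / |c|) (c / x)) := by
        refine setLIntegral_mono' (measurableSet_lt measurable_const (by fun_prop)) fun x hx ↦ ?_
        rw [ENNReal.mul_sub fun _ _ ↦ ENNReal.ofReal_ne_top,
          hw.inversion x (abs_pos.1 (one_pos.trans hx))]
        exact tsub_le_tsub_left (ofReal_mul_cuspDensity_const_div_le ha hc hc₁ hx) _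
    _ = ∫⁻ t in Ioo (-|c|) |c|, w t - cuspDensity (a / |c|) t :=
        setLIntegral_one_lt_abs_comp_const_div hc fun t ↦ w t - cuspDensity (a / |c|) t
    _ ≤ ∫⁻ t in Ioo (-1) 1, w t - cuspDensity (a / |c|) t :=
        lintegral_mono_set (Ioo_subset_Ioo (neg_le_neg hc₁) hc₁)

lemma ae_le_cuspDensity_of_abs_lt_one (hw : IsSubinvariant c w) (hc : c ≠ 0) (hc₁ : |c| < 1)
    (ha : 0 < a) : ∀ᵐ t ∂volume.restrict (Ioo (-1) 1), w t ≤ cuspDensity a t := by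
  have hlt : ∀ t ∈ Ioo (-1 : ℝ) 1, cuspDensity a t < cuspDensity (a / |c|) t := fun t ht ↦
    cuspDensity_lt_cuspDensity (by positivity)
    ((lt_div_iff₀ (abs_pos.2 hc)).2 (mul_lt_of_lt_one_right ha hc₁)) (abs_lt.2 ht)
  have heq := ae_eq_of_ae_le_of_lintegral_le (μ := volume.restrict (Ioo (-1) 1))
    (f := fun t ↦ w t - cuspDensity (a / |c|) t) (g := fun t ↦ w t - cuspDensity a t)
    ((ae_restrict_mem measurableSet_Ioo).mono fun t ht ↦ tsub_le_tsub_left (hlt t ht).le _)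
    (ne_top_of_le_ne_top (hw.setLIntegral_ne_top _) (lintegral_mono fun _ ↦ tsub_le_self))
    (hw.measurable.sub (measurable_cuspDensity a)).aemeasurable
    (hw.setLIntegral_tsub_cuspDensity_le hc hc₁.le ha.le)
  filter_upwards [heq, ae_restrict_of_ae (ae_lt_top hw.measurable hw.lintegral_ne_top),
    ae_restrict_mem measurableSet_Ioo] with t ht htop htI
  exact le_of_tsub_eq_tsub_of_lt htop.ne (hlt t htI) ht.symm

end IsSubinvariant

end Subinvariant

section Parabolic

variable {c a : ℝ} {w : ℝ → ℝ≥0∞}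

lemma IsSubinvariant.ae_tsub_cuspDensity_eq (hw : IsSubinvariant c w)
    (hc : |c| = 1) (ha : 0 ≤ a) :
    w - cuspDensity a =ᵐ[volume.restrict (Ioo (-1) 1)]
      puncturedPeriodization 2 (w - cuspDensity a) := by
  have hm := hw.measurable.sub (measurable_cuspDensity a)
  have hinv := hw.inversion.tsub (isInversionInvariant_cuspDensity a hc)
  refine ae_eq_of_ae_le_of_lintegral_le ?_
    (ne_top_of_le_ne_top (hw.setLIntegral_ne_top _) (lintegral_mono fun _ ↦ tsub_le_self))
    (Measurable.tsum fun j ↦ by fun_prop).aemeasurable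
    (by rw [hinv.lintegral_puncturedPeriodization (abs_ne_zero.1 (hc ▸ one_ne_zero)) hm, hc])
  filter_upwards [hw.le_puncturedPeriodization, ae_restrict_mem measurableSet_Ioo]
    with t ht htI using tsub_cuspDensity_le_puncturedPeriodization ha htI ht

lemma IsSubinvariant.ae_cuspDensity_le_sub_two (hw : IsSubinvariant c w)
    (hc : |c| = 1) (ha : 0 ≤ a) :
    ∀ᵐ t ∂volume.restrict (Ioo (-1) 1),
      cuspDensity a t ≤ w t → cuspDensity a (t - 2) ≤ w (t - 2) := by
  filter_upwards [hw.ae_tsub_cuspDensity_eq hc ha, hw.le_puncturedPeriodization,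
    ae_restrict_of_ae (ae_lt_top hw.measurable hw.lintegral_ne_top),
    ae_restrict_mem measurableSet_Ioo] with t htsub hle htop htI hκ
  have hmax : puncturedPeriodization 2 (w - cuspDensity a + cuspDensity a) t ≤ w t := by
    rw [puncturedPeriodization_add, Pi.add_apply, ← htsub]
    exact (add_le_add_right (puncturedPeriodization_cuspDensity_le ha htI) _).trans
      (tsub_add_cancel_of_le hκ).le
  have hmono : w ≤ w - cuspDensity a + cuspDensity a := le_tsub_add
  by_contra! hlt
  refine (hmax.trans hle).not_gt (ENNReal.tsum_lt_tsum (i := ⟨-1, by simp⟩)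
    (ne_top_of_le_ne_top htop.ne ((puncturedPeriodization_mono hmono t).trans hmax))
    (fun _ ↦ hmono _) ?_)
  have hj : t + ((-1 : ℤ) : ℝ) * 2 = t - 2 := by push_cast; ring
  simp only [hj, Pi.add_apply, Pi.sub_apply]
  exact hlt.trans_le le_add_self

lemma IsSubinvariant.ae_cuspDensity_le_parabolic (hw : IsSubinvariant (-1) w) (ha : 0 ≤ a) :
    ∀ᵐ t ∂volume.restrict (Ioo (-1) 1),
      cuspDensity a t ≤ w t → cuspDensity a (1 / (2 - t)) ≤ w (1 / (2 - t)) := by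
  have hc : |(-1 : ℝ)| = 1 := by simp
  filter_upwards [hw.ae_cuspDensity_le_sub_two hc ha, ae_restrict_mem measurableSet_Ioo]
    with t ht htI hle
  have ht2 : t - 2 ≠ 0 := by linarith [htI.2]
  have h : 1 / (2 - t) = -1 / (t - 2) := by rw [neg_div, ← div_neg, neg_sub]
  rw [h, (isInversionInvariant_cuspDensity a hc).const_div_le_const_div_iff hw.inversion
    (by norm_num) ht2]
  exact ht hle

/-- The coordinate `k ↦ 1 - 1 / k` at the cusp `1`, in which the parabolic map `t ↦ 1 / (2 - t)`
is the translation `k ↦ k + 1`. -/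
noncomputable def cuspChart (k : ℝ) : ℝ :=
  1 - 1 / k

lemma cuspChart_mem_Ioo_iff {k : ℝ} : cuspChart k ∈ Ioo (-1) 1 ↔ 1 / 2 < k := by
  rw [cuspChart, mem_Ioo, sub_lt_self_iff, one_div_pos]
  constructor
  · rintro ⟨h, hk⟩
    have h' : 1 / k < 2 := by linarith
    rwa [one_div_lt hk two_pos] at h'
  · intro h
    have hk : 0 < k := by linarith
    have h' : 1 / k < 2 := by rwa [one_div_lt hk two_pos]
    exact ⟨by linarith, hk⟩

lemma one_div_two_sub_cuspChart {k : ℝ} (hk : 0 < k) :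
    1 / (2 - cuspChart k) = cuspChart (k + 1) := by
  have h : 2 - (1 - 1 / k) = (k + 1) / k := by field_simp; ring
  rw [cuspChart, cuspChart, h]
  field_simp
  ring

lemma ae_cuspChart_iff {p : ℝ → Prop} : (∀ᵐ k, p (cuspChart k)) ↔ ∀ᵐ t, p t := by
  have hinv := quasiMeasurePreserving_const_div (one_ne_zero (α := ℝ))
  have hsub := (Measure.measurePreserving_sub_left volume (1 : ℝ)).quasiMeasurePreserving
  exact ⟨fun h ↦ by simpa [cuspChart] using (hinv.comp hsub).ae h, (hsub.comp hinv).ae⟩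

lemma ae_restrict_Ioo_iff_ae_cuspChart {p : ℝ → Prop} :
    (∀ᵐ t ∂volume.restrict (Ioo (-1) 1), p t) ↔ ∀ᵐ k, 1 / 2 < k → p (cuspChart k) := by
  simp only [ae_restrict_iff' measurableSet_Ioo, ← ae_cuspChart_iff (p := fun t ↦ t ∈ _ → p t),
    cuspChart_mem_Ioo_iff]

lemma lintegral_mul_comp_cuspChart (g : ℝ → ℝ≥0∞) :
    ∫⁻ k, ENNReal.ofReal (1 / k ^ 2) * g (cuspChart k) = ∫⁻ t, g t := by
  have h := lintegral_mul_comp_const_div one_ne_zero fun s ↦ g (1 - s)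
  rwa [abs_one, lintegral_sub_left_eq_self] at h

lemma ofReal_mul_cuspDensity_cuspChart {k : ℝ} (hk : 1 / 2 < k) :
    ENNReal.ofReal (1 / k ^ 2) * cuspDensity a (cuspChart k)
      = ENNReal.ofReal (a / (2 * k - 1)) := by
  have h₁ : 0 < k := by linarith
  have h₂ : 0 < 2 * k - 1 := by linarith
  have h : 1 - (1 - 1 / k) ^ 2 = (2 * k - 1) / k ^ 2 := by field_simp; ring
  rw [cuspDensity, cuspChart, ← ENNReal.ofReal_mul (by positivity), h,
    abs_of_pos (div_pos h₂ (pow_pos h₁ 2))]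
  congr 1
  field_simp

lemma tsum_ofReal_div_two_mul_sub_one_eq_top {k : ℝ} (ha : 0 < a) (hk : 1 / 2 < k) :
    ∑' n : ℕ, ENNReal.ofReal (a / (2 * (k + n) - 1)) = ∞ := by
  by_contra h
  have hpos : ∀ n : ℕ, 0 < n + (k - 1 / 2) := fun n ↦ by linarith [n.cast_nonneg (α := ℝ)]
  refine absurd ((Real.summable_one_div_nat_add_rpow (k - 1 / 2) 1).1 ?_) (lt_irrefl _)
  refine ((ENNReal.summable_toReal h).mul_left (2 / a)).congr fun n ↦ ?_
  have h₂ : 2 * (k + n) - 1 = 2 * (n + (k - 1 / 2)) := by ring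
  have hn := hpos n
  rw [h₂, ENNReal.toReal_ofReal (by positivity), rpow_one, abs_of_pos hn]
  field_simp

lemma IsSubinvariant.ae_cuspDensity_cuspChart_le_add (hw : IsSubinvariant (-1) w) (ha : 0 ≤ a) :
    ∀ᵐ k : ℝ, 1 / 2 < k → cuspDensity a (cuspChart k) ≤ w (cuspChart k) →
      ∀ n : ℕ, cuspDensity a (cuspChart (k + n)) ≤ w (cuspChart (k + n)) := by
  have hstep := ae_restrict_Ioo_iff_ae_cuspChart.1 (hw.ae_cuspDensity_le_parabolic ha)
  have hshift := ae_all_iff.2 fun n : ℕ ↦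
    (measurePreserving_add_right volume (n : ℝ)).quasiMeasurePreserving.ae hstep
  filter_upwards [hshift] with k hk hk2 hle n
  induction n with
  | zero => simpa using hle
  | succ n ih =>
    have hkn : 1 / 2 < k + n := by linarith [n.cast_nonneg (α := ℝ)]
    rw [Nat.cast_succ, ← add_assoc, ← one_div_two_sub_cuspChart (by linarith)]
    exact hk n hkn ih

lemma IsSubinvariant.ae_le_cuspDensity_of_eq_neg_one (hw : IsSubinvariant (-1) w) (ha : 0 < a) :
    ∀ᵐ t ∂volume.restrict (Ioo (-1) 1), w t ≤ cuspDensity a t := by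
  rw [ae_restrict_Ioo_iff_ae_cuspChart]
  have hwm := hw.measurable
  have hfin := ae_periodization_ne_top one_pos
    (g := fun k ↦ ENNReal.ofReal (1 / k ^ 2) * w (cuspChart k))
    (by unfold cuspChart; fun_prop) (lintegral_mul_comp_cuspChart w ▸ hw.lintegral_ne_top)
  filter_upwards [hw.ae_cuspDensity_cuspChart_le_add ha.le, hfin] with k hk hfin hk2
  by_contra! hlt
  have hle := hk hk2 hlt.le
  refine hfin (top_unique ?_)
  calc ∞ = ∑' n : ℕ, ENNReal.ofReal (a / (2 * (k + n) - 1)) :=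
        (tsum_ofReal_div_two_mul_sub_one_eq_top ha hk2).symm
    _ ≤ ∑' n : ℕ, ENNReal.ofReal (1 / (k + n) ^ 2) * w (cuspChart (k + n)) := by
        refine ENNReal.tsum_le_tsum fun n ↦ ?_
        rw [← ofReal_mul_cuspDensity_cuspChart (by linarith [n.cast_nonneg (α := ℝ)])]
        gcongr
        exact hle n
    _ ≤ _ := by
        simpa only [periodization, mul_one, Int.cast_natCast] using
          ENNReal.tsum_comp_le_tsum_of_injective (f := ((↑) : ℕ → ℤ)) Nat.cast_injective
          fun j : ℤ ↦ ENNReal.ofReal (1 / (k + j) ^ 2) * w (cuspChart (k + j))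

lemma IsSubinvariant.ae_eq_zero (hw : IsSubinvariant c w) (hc : -1 ≤ c)
    (hc₀ : c < 0) : w =ᵐ[volume] 0 := by
  have hc₁ : |c| ≤ 1 := abs_le.2 ⟨hc, by linarith⟩
  have hle : ∀ a : ℝ, 0 < a → ∀ᵐ t ∂volume.restrict (Ioo (-1) 1), w t ≤ cuspDensity a t := by
    intro a ha
    rcases hc.eq_or_lt with rfl | hlt
    · exact hw.ae_le_cuspDensity_of_eq_neg_one ha
    · exact hw.ae_le_cuspDensity_of_abs_lt_one hc₀.ne (abs_lt.2 ⟨hlt, by linarith⟩) ha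
  have hIoo : ∀ᵐ t ∂volume.restrict (Ioo (-1) 1), w t = 0 := by
    filter_upwards [ae_all_iff.2 fun n : ℕ ↦ hle (1 / ((n : ℝ) + 1)) Nat.one_div_pos_of_nat]
      with t ht
    exact le_antisymm (ge_of_tendsto' (tendsto_cuspDensity_one_div_add_one t) ht) zero_le
  rw [ae_restrict_iff' measurableSet_Ioo] at hIoo
  filter_upwards [hIoo, (quasiMeasurePreserving_const_div hc₀.ne).ae hIoo,
    Measure.ae_ne volume (0 : ℝ), Measure.ae_ne volume (1 : ℝ), Measure.ae_ne volume (-1 : ℝ)]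
    with t ht htc ht₀ ht₁ ht₂
  rcases le_or_gt 1 |t| with h | h
  · have hmem : c / t ∈ Ioo (-1) 1 := by
      rw [mem_Ioo, ← abs_lt, abs_div, div_lt_one (abs_pos.2 ht₀)]
      exact hc₁.trans_lt (h.lt_of_ne fun h ↦ (abs_eq zero_le_one).1 h.symm |>.elim ht₁ ht₂)
    rw [← hw.inversion t ht₀, htc hmem, mul_zero, Pi.zero_apply]
  · exact ht (abs_lt.1 h)

end Parabolic

section LatticeCross

/-- `F` is orthogonal to the exponentials `e^{iπmt}` and `e^{iπmc/t}`, `m ∈ ℤ`: the two arms of the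
lattice-cross, with the variable scaled so that the first arm consists of the characters of period
`2`. -/
def AnnihilatesLatticeCross (c : ℝ) (F : ℝ → ℂ) : Prop :=
  (∀ m : ℤ, ∫ t : ℝ, fourier m (t : AddCircle (2 : ℝ)) * F t = 0) ∧
    ∀ m : ℤ, ∫ t : ℝ, fourier m ((c / t : ℝ) : AddCircle (2 : ℝ)) * F t = 0

variable {c : ℝ} {F G : ℝ → ℂ}

lemma AnnihilatesLatticeCross.congr_ae (h : AnnihilatesLatticeCross c F)
    (hFG : F =ᵐ[volume] G) : AnnihilatesLatticeCross c G := by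
  have hcongr : ∀ g : ℝ → ℂ, ∫ t, g t * G t = ∫ t, g t * F t := fun g ↦
    integral_congr_ae (hFG.mono fun t ht ↦ by simp only [ht])
  exact ⟨fun m ↦ (hcongr _).trans (h.1 m), fun m ↦ (hcongr _).trans (h.2 m)⟩

lemma integral_mul_smul_comp_const_div (hc : c ≠ 0) (ψ F : ℝ → ℂ) :
    ∫ x, ψ x * ((|c| / x ^ 2) • F (c / x)) = ∫ x, ψ (c / x) * F x := by
  rw [← integral_smul_comp_const_div hc fun x ↦ ψ (c / x) * F x]
  simp only [div_div_cancel₀ hc, mul_smul_comm]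

lemma ae_enorm_le_puncturedPeriodization (hFm : Measurable F) (hF : Integrable F)
    (h : ∀ m : ℤ, ∫ t : ℝ, fourier m (t : AddCircle (2 : ℝ)) * F t = 0) :
    ∀ᵐ t ∂volume.restrict (Ioo (-1) 1), ‖F t‖ₑ ≤ puncturedPeriodization 2 (‖F ·‖ₑ) t := by
  have : Fact ((0 : ℝ) < 2) := ⟨two_pos⟩
  have hend : (-1 : ℝ) + 2 = 1 := by norm_num
  have h0 := ae_periodization_eq_zero hFm hF h (-1)
  rw [hend, ← restrict_Ioo_eq_restrict_Ioc] at h0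
  exact h0.mono fun t ↦ enorm_le_puncturedPeriodization_of_periodization_eq_zero

lemma isInversionInvariant_add_comp_const_div (hc : c ≠ 0) (g : ℝ → ℝ≥0∞) :
    IsInversionInvariant c fun x ↦ g x + ENNReal.ofReal (|c| / x ^ 2) * g (c / x) := fun x hx ↦ by
  have h : |c| / x ^ 2 * (|c| / (c / x) ^ 2) = 1 := by
    rw [div_pow, ← sq_abs c]
    have := abs_pos.2 hc
    field_simp
  rw [mul_add, ← mul_assoc, ← ENNReal.ofReal_mul (by positivity), h, div_div_cancel₀ hc,
    ENNReal.ofReal_one, one_mul, add_comm]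

lemma AnnihilatesLatticeCross.isSubinvariant (h : AnnihilatesLatticeCross c F) (hc : c ≠ 0)
    (hFm : Measurable F) (hF : Integrable F) :
    IsSubinvariant c fun x ↦ ‖F x‖ₑ + ENNReal.ofReal (|c| / x ^ 2) * ‖F (c / x)‖ₑ where
  measurable := by fun_prop
  lintegral_ne_top := by
    rw [lintegral_add_left hFm.enorm, lintegral_mul_comp_const_div hc (‖F ·‖ₑ)]
    exact ENNReal.add_ne_top.2 ⟨hF.2.ne, hF.2.ne⟩
  inversion := isInversionInvariant_add_comp_const_div hc (‖F ·‖ₑ)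
  le_puncturedPeriodization := by
    have hG := ae_enorm_le_puncturedPeriodization (F := fun x ↦ (|c| / x ^ 2) • F (c / x))
      (by fun_prop) (integrable_smul_comp_const_div hc hF) fun m ↦
        (integral_mul_smul_comp_const_div hc (fun x ↦ fourier m (x : AddCircle (2 : ℝ))) F).trans
          (h.2 m)
    have henorm : ∀ x, ‖(|c| / x ^ 2) • F (c / x)‖ₑ
        = ENNReal.ofReal (|c| / x ^ 2) * ‖F (c / x)‖ₑ := fun x ↦ by
      rw [enorm_smul, Real.enorm_of_nonneg (by positivity)]
    simp only [henorm] at hG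
    filter_upwards [ae_enorm_le_puncturedPeriodization hFm hF h.1, hG] with t ht₁ ht₂
    exact (add_le_add ht₁ ht₂).trans_eq (congrFun (puncturedPeriodization_add _ _) t).symm

lemma AnnihilatesLatticeCross.ae_eq_zero (h : AnnihilatesLatticeCross c F) (hF : Integrable F)
    (hc : -1 ≤ c) (hc₀ : c < 0) : F =ᵐ[volume] 0 := by
  have hmk := hF.1.ae_eq_mk
  have hw := ((h.congr_ae hmk).isSubinvariant hc₀.ne hF.1.stronglyMeasurable_mk.measurable
    (hF.congr hmk)).ae_eq_zero hc hc₀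
  filter_upwards [hmk, hw] with t ht hwt
  rw [ht]
  exact enorm_eq_zero.1 (add_eq_zero.1 hwt).1

/-- The difference of the Cauchy densities of scale `γ` at `1` and `-1`, the boundary values of a
harmonic function whose poles `±1 - iγ` are exchanged by `z ↦ -(1 + γ²) / z` and agree modulo
`2`. -/
noncomputable def cauchyDifference (γ : ℝ≥0) (t : ℝ) : ℂ :=
  ((ProbabilityTheory.cauchyPDFReal 1 γ t - ProbabilityTheory.cauchyPDFReal (-1) γ t : ℝ) : ℂ)

variable {γ : ℝ≥0}

lemma integrable_cauchyDifference (γ : ℝ≥0) : Integrable (cauchyDifference γ) :=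
  ((ProbabilityTheory.integrable_cauchyPDFReal 1).sub
    (ProbabilityTheory.integrable_cauchyPDFReal (-1))).ofReal

lemma cauchyPDFReal_neg_div {x₀ b s : ℝ} (hb : b = x₀ ^ 2 + γ ^ 2) (hb₀ : b ≠ 0) (hs : s ≠ 0) :
    b / s ^ 2 * ProbabilityTheory.cauchyPDFReal x₀ γ (-b / s)
      = ProbabilityTheory.cauchyPDFReal (-x₀) γ s := by
  have h : (-b / s - x₀) ^ 2 + γ ^ 2 = b / s ^ 2 * ((s - -x₀) ^ 2 + γ ^ 2) := by
    field_simp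
    rw [hb]
    ring
  rw [ProbabilityTheory.cauchyPDFReal_def, ProbabilityTheory.cauchyPDFReal_def, h, mul_inv]
  field_simp

lemma cauchyDifference_neg_div {s : ℝ} (hs : s ≠ 0) :
    (|-(1 + (γ : ℝ) ^ 2)| / s ^ 2) • cauchyDifference γ (-(1 + γ ^ 2) / s)
      = -cauchyDifference γ s := by
  have hb : 0 < 1 + (γ : ℝ) ^ 2 := by positivity
  have h₁ := cauchyPDFReal_neg_div (γ := γ) (x₀ := 1) (by norm_num) hb.ne' hs
  have h₂ := cauchyPDFReal_neg_div (γ := γ) (x₀ := -1) (by norm_num) hb.ne' hs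
  rw [neg_neg] at h₂
  rw [abs_neg, abs_of_pos hb, cauchyDifference, cauchyDifference, Complex.real_smul,
    ← Complex.ofReal_mul, ← Complex.ofReal_neg, mul_sub, h₁, h₂, neg_sub]

lemma integral_fourier_mul_cauchyDifference (γ : ℝ≥0) (m : ℤ) :
    ∫ t : ℝ, fourier m (t : AddCircle (2 : ℝ)) * cauchyDifference γ t = 0 := by
  have : Fact ((0 : ℝ) < 2) := ⟨two_pos⟩
  let I (x₀ : ℝ) : ℝ → ℂ := fun t ↦
    fourier m (t : AddCircle (2 : ℝ)) * (ProbabilityTheory.cauchyPDFReal x₀ γ t : ℂ)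
  have hI : ∀ x₀, Integrable (I x₀) := fun x₀ ↦
    integrable_addCircle_mul _ (ProbabilityTheory.integrable_cauchyPDFReal x₀).ofReal
  have hshift : ∀ t, I 1 (t + 2) = I (-1) t := fun t ↦ by
    simp only [I, AddCircle.coe_add_period, ProbabilityTheory.cauchyPDFReal_def]
    ring_nf
  calc ∫ t : ℝ, fourier m (t : AddCircle (2 : ℝ)) * cauchyDifference γ t
      = ∫ t, I 1 t - I (-1) t := by simp only [I, cauchyDifference, Complex.ofReal_sub, mul_sub]
    _ = 0 := by
      rw [integral_sub (hI 1) (hI (-1)), ← integral_add_right_eq_self (I 1) 2]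
      simp only [hshift, sub_self]

lemma annihilatesLatticeCross_cauchyDifference (γ : ℝ≥0) :
    AnnihilatesLatticeCross (-(1 + γ ^ 2)) (cauchyDifference γ) := by
  refine ⟨integral_fourier_mul_cauchyDifference γ, fun m ↦ ?_⟩
  rw [← integral_mul_smul_comp_const_div (neg_ne_zero.2 (by positivity))
    (fun t ↦ fourier m (t : AddCircle (2 : ℝ))) (cauchyDifference γ), ← neg_eq_zero,
    ← integral_neg, ← integral_fourier_mul_cauchyDifference γ m]
  refine integral_congr_ae ?_
  filter_upwards [Measure.ae_ne volume (0 : ℝ)] with t ht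
  rw [cauchyDifference_neg_div ht, mul_neg, neg_neg]

lemma cauchyDifference_ne_zero (hγ : γ ≠ 0) {t : ℝ} (ht : t ≠ 0) : cauchyDifference γ t ≠ 0 := by
  rw [cauchyDifference, Complex.ofReal_ne_zero, sub_ne_zero, ProbabilityTheory.cauchyPDFReal_def,
    ProbabilityTheory.cauchyPDFReal_def]
  intro h
  have hπγ : π⁻¹ * (γ : ℝ) ≠ 0 := mul_ne_zero (inv_ne_zero pi_ne_zero) (NNReal.coe_ne_zero.2 hγ)
  have h' := inv_injective (mul_left_cancel₀ hπγ h)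
  exact ht (by linarith)

lemma exists_annihilatesLatticeCross_not_ae_eq_zero (hc : c < -1) :
    ∃ F, Integrable F ∧ AnnihilatesLatticeCross c F ∧ ¬ F =ᵐ[volume] 0 := by
  let γ : ℝ≥0 := (√(-c - 1)).toNNReal
  have hγ : 0 < γ := toNNReal_pos.2 (sqrt_pos.2 (by linarith))
  have hc' : c = -(1 + (γ : ℝ) ^ 2) := by
    rw [coe_toNNReal _ (sqrt_nonneg _), sq_sqrt (by linarith)]
    ring
  refine ⟨cauchyDifference γ, integrable_cauchyDifference γ,
    hc' ▸ annihilatesLatticeCross_cauchyDifference γ, fun h ↦ ?_⟩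
  obtain ⟨t, ht, ht₀⟩ := (h.and (Measure.ae_ne volume (0 : ℝ))).exists
  exact cauchyDifference_ne_zero hγ.ne' ht₀ ht

lemma annihilatesLatticeCross_iff_comp_mul_left {α : ℝ} (β : ℝ) (hα : α ≠ 0) (F : ℝ → ℂ) :
    AnnihilatesLatticeCross (-(α * β)) F ↔
      (∀ m : ℤ, ∫ t : ℝ, Complex.exp (Complex.I * π * α * m * t) * F (α * t) = 0) ∧
        ∀ n : ℤ, ∫ t : ℝ, Complex.exp (-(Complex.I * π * β * n) / t) * F (α * t) = 0 := by
  have hscale : ∀ g : ℝ → ℂ, ∫ t, g t = 0 ↔ ∫ t, g (α * t) = 0 := fun g ↦ by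
    rw [Measure.integral_comp_mul_left, smul_eq_zero_iff_right (by positivity)]
  have hfourier : ∀ (m : ℤ) (t : ℝ), fourier m ((α * t : ℝ) : AddCircle (2 : ℝ))
      = Complex.exp (Complex.I * π * α * m * t) := fun m t ↦ by
    rw [fourier_coe_apply]
    congr 1
    push_cast
    ring
  have hfourier_div : ∀ (n : ℤ) (t : ℝ), fourier n ((-(α * β) / (α * t) : ℝ) : AddCircle (2 : ℝ))
      = Complex.exp (-(Complex.I * π * β * n) / t) := fun n t ↦ by
    rw [fourier_coe_apply, ← mul_neg, mul_div_mul_left _ _ hα]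
    congr 1
    push_cast
    ring
  refine and_congr (forall_congr' fun m ↦ ?_) (forall_congr' fun n ↦ ?_) <;> rw [hscale]
  · simp only [hfourier]
  · simp only [hfourier_div]

end LatticeCross

/-- The full lattice-cross Heisenberg uniqueness theorem for the hyperbola
(Hedenmalm–Montes): with `M = 2π` normalized away, `(Γ, Λ_{α,β})` is a
Heisenberg uniqueness pair iff `αβ ≤ 1`. -/
theorem stmt_0 (α β : ℝ) (hα : 0 < α) (hβ : 0 < β) :
    α * β ≤ 1 ↔
      ∀ f : ℝ → ℂ, Integrable f →
        (∀ m : ℤ, ∫ t : ℝ, Complex.exp (Complex.I * π * α * m * t) * f t = 0) →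
        (∀ n : ℤ, ∫ t : ℝ, Complex.exp (-(Complex.I * π * β * n) / t) * f t = 0) →
        f =ᵐ[volume] 0 := by
  have hpos := mul_pos hα hβ
  have hscale (F : ℝ → ℂ) := annihilatesLatticeCross_iff_comp_mul_left β hα.ne' F
  constructor
  · intro h f hf h₁ h₂
    have hfα : ∀ t, f (α * t / α) = f t := fun t ↦ by rw [mul_div_cancel_left₀ t hα.ne']
    have hF := ((hscale fun t ↦ f (t / α)).2 (by simpa only [hfα] using ⟨h₁, h₂⟩)).ae_eq_zero
      (hf.comp_div hα.ne') (by linarith) (by linarith)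
    filter_upwards [(Measure.quasiMeasurePreserving_smul volume hα.ne').ae hF] with t ht
    rwa [smul_eq_mul, hfα] at ht
  · intro h
    by_contra! hlt
    obtain ⟨F, hF, hann, hne⟩ :=
      exists_annihilatesLatticeCross_not_ae_eq_zero (neg_lt_neg hlt)
    obtain ⟨h₁, h₂⟩ := (hscale F).1 hann
    have hFα := h (fun t ↦ F (α * t)) (hF.comp_mul_left' hα.ne') h₁ h₂
    refine hne ?_
    filter_upwards [(Measure.quasiMeasurePreserving_smul volume (inv_ne_zero hα.ne')).ae hFα]
      with t ht
    simpa [hα.ne'] using ht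
end

section
/- Fix positive real numbers α and β with αβ < 4. If f ∈ L¹((0,∞), ℂ) satisfies ∫₀^∞ e^{iπαmt} f(t) dt = 0 for all m ∈ ℤ and ∫₀^∞ e^{−iπβn/t} f(t) dt = 0 for all n ∈ ℤ, then f = 0 almost everywhere on (0,∞). -/
open MeasureTheory Real

/-!
Put `T = 2 / α`, `γ = β / α`, and let `g s = (γ / s ^ 2) • f (γ / s)` be the density of `f` in the
variable `γ / t`. The two families of equations say that the periodizations `∑ k, f (x + k * T)`
and `∑ k, g (x + k * T)` vanish on `(0, T]`. Solving each for its first term bounds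
`H = ‖f‖ + ‖g‖` on `(0, T]` by `L H`, where `L` is the transfer operator of the Gauss-type map
`y ↦ γ / y mod T` on `(0, γ / T)`. As `L` does not increase mass, `H = L H`, and the support of `H`
is invariant under the map. But `w y = 1 / (γ / T + y)` satisfies `L w x = 1 / (T + x) < w x` when
`γ < T ^ 2`, that is when `α * β < 4`, which rules out invariant sets of positive measure. Hence
`H = 0`, so `f` vanishes on `(0, T]` and, through `g`, on `(T, ∞)`.
-/

section

open Set Filter
open scoped ENNReal

theorem integrable_tsum {E X ι : Type*} [NormedAddCommGroup E] [CompleteSpace E]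
    [MeasurableSpace X] [Countable ι] {μ : Measure X} {F : ι → X → E}
    (hF : ∀ i, AEStronglyMeasurable (F i) μ) (hsum : ∑' i, ∫⁻ x, ‖F i x‖ₑ ∂μ ≠ ∞) :
    Integrable (fun x ↦ ∑' i, F i x) μ := by
  have hint (i : ι) : Integrable (F i) μ := ⟨hF i, (ENNReal.ne_top_of_tsum_ne_top hsum i).lt_top⟩
  have hL1 : ∑' i, ‖(hint i).toL1 (F i)‖ₑ ≠ ∞ := by
    simpa only [Integrable.enorm_toL1] using hsum
  refine (L1.integrable_coeFn (∑' i, (hint i).toL1 (F i))).congr ?_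
  filter_upwards [Lp.coeFn_tsum hL1, ae_all_iff.2 fun i ↦ (hint i).coeFn_toL1] with x hx hF
  simp only [hx, hF]

section Periodization

variable {T : ℝ} [hT : Fact (0 < T)]

theorem restrict_Ioi_eq_sum_map_add_right (c : ℝ) :
    volume.restrict (Ioi c) =
      .sum fun k : ℕ ↦ (volume.restrict (Ioc 0 T)).map (· + (k * T + c)) := by
  have hmono : Monotone fun k : ℕ ↦ k * T + c := fun i j hij ↦ by
    dsimp only
    gcongr
    exact hT.out.le
  have hcover : ⋃ k : ℕ, Ioc (k * T + c) ((Order.succ k : ℕ) * T + c) = Ioi c := by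
    have hunbdd : ¬BddAbove (range fun k : ℕ ↦ k * T + c) :=
      not_bddAbove_of_tendsto_atTop (tendsto_atTop_add_const_right _ c
        (tendsto_natCast_atTop_atTop.atTop_mul_const hT.out))
    simpa using
      iUnion_Ioc_map_succ_eq_Ioi (f := fun k : ℕ ↦ k * T + c) (fun k ↦ hmono bot_le) hunbdd
  rw [← hcover, Measure.restrict_iUnion hmono.pairwise_disjoint_on_Ioc_succ
    fun _ ↦ measurableSet_Ioc]
  congr with k : 1
  have hpre : (· + (k * T + c)) ⁻¹' Ioc (k * T + c) ((Order.succ k : ℕ) * T + c) = Ioc 0 T := by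
    rw [preimage_add_const_Ioc, Order.succ_eq_add_one]
    congr 1 <;> push_cast <;> ring
  rw [← hpre]
  exact ((measurePreserving_add_right volume _).restrict_preimage measurableSet_Ioc).map_eq.symm

theorem lintegral_Ioi_eq_tsum {c : ℝ} {F : ℝ → ℝ≥0∞}
    (hF : AEMeasurable F (volume.restrict (Ioi c))) :
    ∫⁻ t in Ioi c, F t = ∑' k : ℕ, ∫⁻ x in Ioc 0 T, F (x + (k * T + c)) := by
  rw [restrict_Ioi_eq_sum_map_add_right (T := T)] at hF ⊢
  rw [lintegral_sum_measure]
  congr with k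
  exact lintegral_map' (hF.mono_measure (Measure.le_sum _ k)) (measurable_add_const _).aemeasurable

variable {E : Type*} [NormedAddCommGroup E]

theorem aestronglyMeasurable_comp_add_right {c : ℝ} {f : ℝ → E}
    (hf : AEStronglyMeasurable f (volume.restrict (Ioi c))) (k : ℕ) :
    AEStronglyMeasurable (fun x ↦ f (x + (k * T + c))) (volume.restrict (Ioc 0 T)) := by
  rw [restrict_Ioi_eq_sum_map_add_right (T := T)] at hf
  exact (hf.mono_measure (Measure.le_sum _ k)).comp_measurable (measurable_add_const _)

theorem tsum_lintegral_enorm_comp_add_right_ne_top {c : ℝ} {f : ℝ → E}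
    (hf : IntegrableOn f (Ioi c)) :
    ∑' k : ℕ, ∫⁻ x in Ioc 0 T, ‖f (x + (k * T + c))‖ₑ ≠ ∞ := by
  simpa only [← lintegral_Ioi_eq_tsum hf.1.enorm] using hf.2.ne

theorem integral_Ioi_eq_integral_tsum [NormedSpace ℝ E] {c : ℝ} {f : ℝ → E}
    (hf : IntegrableOn f (Ioi c)) :
    ∫ t in Ioi c, f t = ∫ x in Ioc 0 T, ∑' k : ℕ, f (x + (k * T + c)) := by
  rw [integral_tsum (aestronglyMeasurable_comp_add_right hf.1)
    (tsum_lintegral_enorm_comp_add_right_ne_top hf)]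
  rw [IntegrableOn, restrict_Ioi_eq_sum_map_add_right (T := T)] at hf
  rw [restrict_Ioi_eq_sum_map_add_right (T := T), integral_sum_measure hf]
  congr with k
  exact integral_map (measurable_add_const _).aemeasurable (hf.1.mono_measure (Measure.le_sum _ k))

theorem ae_summable_norm_comp_add_right [CompleteSpace E] {c : ℝ} {f : ℝ → E}
    (hf : IntegrableOn f (Ioi c)) :
    ∀ᵐ x ∂volume.restrict (Ioc 0 T), Summable fun k : ℕ ↦ ‖f (x + (k * T + c))‖ :=
  summable_norm_of_tsum_eLpNorm_ne_top le_rfl (aestronglyMeasurable_comp_add_right hf.1) <| by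
    simpa only [eLpNorm_one_eq_lintegral_enorm] using tsum_lintegral_enorm_comp_add_right_ne_top hf

end Periodization

section Fourier

theorem coe_add_natCast_mul {T : ℝ} (x : ℝ) (k : ℕ) : ((x + k * T : ℝ) : AddCircle T) = x := by
  rw [← nsmul_eq_mul, AddCircle.coe_add, AddCircle.coe_nsmul, AddCircle.coe_period, smul_zero,
    add_zero]

variable {T : ℝ} [hT : Fact (0 < T)] {E : Type*} [NormedAddCommGroup E] [NormedSpace ℂ E]

theorem integral_continuousMap_smul_eq_zero {X : Type*} [MeasurableSpace X] {μ : Measure X}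
    {p : X → AddCircle T} (hp : Measurable p) {f : X → E} (hf : Integrable f μ)
    (h : ∀ n : ℤ, ∫ x, fourier n (p x) • f x ∂μ = 0) (φ : C(AddCircle T, ℂ)) :
    ∫ x, φ (p x) • f x ∂μ = 0 := by
  have hint (φ : C(AddCircle T, ℂ)) : Integrable (fun x ↦ φ (p x) • f x) μ :=
    hf.bdd_smul ‖φ‖ (φ.continuous.measurable.comp hp).aestronglyMeasurable
      (.of_forall fun x ↦ φ.norm_coe_le_norm (p x))
  let L : C(AddCircle T, ℂ) →ₗ[ℂ] E :=
    { toFun φ := ∫ x, φ (p x) • f x ∂μ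
      map_add' φ ψ := by
        simp only [ContinuousMap.add_apply, add_smul, integral_add (hint φ) (hint ψ)]
      map_smul' c φ := by
        simp only [ContinuousMap.smul_apply, smul_assoc, integral_smul, RingHom.id_apply] }
  have hL (φ : C(AddCircle T, ℂ)) : ‖L φ‖ ≤ (∫ x, ‖f x‖ ∂μ) * ‖φ‖ := by
    rw [← integral_mul_const]
    refine norm_integral_le_of_norm_le (hf.norm.mul_const _) (.of_forall fun x ↦ ?_)
    rw [norm_smul, mul_comm]
    gcongr
    exact φ.norm_coe_le_norm (p x)
  have hspan : (⊤ : Submodule ℂ C(AddCircle T, ℂ)) ≤ (L.mkContinuous _ hL).ker := by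
    rw [← span_fourier_closure_eq_top]
    refine Submodule.topologicalClosure_minimal _ (Submodule.span_le.2 ?_)
      (L.mkContinuous _ hL).isClosed_ker
    rintro _ ⟨n, rfl⟩
    exact h n
  exact hspan (Submodule.mem_top (x := φ))

theorem ae_Ioc_eq_zero_of_integral_fourier_smul_eq_zero [CompleteSpace E] {f : ℝ → E}
    (hf : IntegrableOn f (Ioc 0 T))
    (h : ∀ n : ℤ, ∫ x in Ioc 0 T, fourier n (x : AddCircle T) • f x = 0) :
    ∀ᵐ x ∂volume.restrict (Ioc 0 T), f x = 0 := by
  rw [← restrict_Ioo_eq_restrict_Ioc, ae_restrict_iff' measurableSet_Ioo]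
  refine isOpen_Ioo.ae_eq_zero_of_integral_contDiff_smul_eq_zero
    (hf.mono_set Ioo_subset_Ioc_self).locallyIntegrableOn fun g hg _ hsupp ↦ ?_
  have hg0 {x : ℝ} (hx : x ∉ Ioo 0 T) : g x = 0 :=
    image_eq_zero_of_notMem_tsupport fun hxs ↦ hx (hsupp hxs)
  let φ : C(AddCircle T, ℂ) :=
    ⟨AddCircle.liftIco T 0 fun x ↦ (g x : ℂ), AddCircle.liftIco_zero_continuous
      (by simp [hg0]) (Complex.continuous_ofReal.comp hg.continuous).continuousOn⟩
  calc ∫ x, g x • f x = ∫ x in Ioo 0 T, g x • f x :=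
        (setIntegral_eq_integral_of_forall_compl_eq_zero fun x hx ↦ by simp [hg0 hx]).symm
    _ = ∫ x in Ioo 0 T, φ (x : AddCircle T) • f x := by
        refine setIntegral_congr_fun measurableSet_Ioo fun x hx ↦ ?_
        simp [φ, AddCircle.liftIco_zero_coe_apply (Ioo_subset_Ico_self hx)]
    _ = 0 := by
        rw [← integral_Ioc_eq_integral_Ioo]
        exact integral_continuousMap_smul_eq_zero AddCircle.measurable_mk' hf h φ

theorem ae_enorm_le_tsum_enorm_of_integral_fourier_smul_eq_zero [CompleteSpace E] {f : ℝ → E}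
    (hf : IntegrableOn f (Ioi 0))
    (h : ∀ n : ℤ, ∫ t in Ioi (0 : ℝ), fourier n (t : AddCircle T) • f t = 0) :
    ∀ᵐ x ∂volume.restrict (Ioc 0 T), ‖f x‖ₑ ≤ ∑' k : ℕ, ‖f (x + (k + 1) * T)‖ₑ := by
  have hsum : IntegrableOn (fun x ↦ ∑' k : ℕ, f (x + k * T)) (Ioc 0 T) := by
    simpa only [add_zero, IntegrableOn] using
      integrable_tsum (aestronglyMeasurable_comp_add_right hf.1)
        (tsum_lintegral_enorm_comp_add_right_ne_top hf)
  have hzero : ∀ᵐ x ∂volume.restrict (Ioc 0 T), ∑' k : ℕ, f (x + k * T) = 0 := by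
    refine ae_Ioc_eq_zero_of_integral_fourier_smul_eq_zero hsum fun n ↦ ?_
    have hint : IntegrableOn (fun t : ℝ ↦ fourier n (t : AddCircle T) • f t) (Ioi 0) :=
      hf.bdd_smul 1
        ((fourier n).continuous.measurable.comp AddCircle.measurable_mk').aestronglyMeasurable
        (.of_forall fun t ↦ (Circle.norm_coe _).le)
    rw [← h n, integral_Ioi_eq_integral_tsum (T := T) hint]
    simp only [add_zero, coe_add_natCast_mul, tsum_const_smul'']
  filter_upwards [hzero, ae_summable_norm_comp_add_right (T := T) hf] with x hx hsummable
  have hshift := hsummable.of_norm.tsum_eq_zero_add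
  simp only [add_zero, Nat.cast_zero, zero_mul, hx, Nat.cast_succ] at hshift
  rw [eq_neg_of_add_eq_zero_left hshift.symm, enorm_neg]
  exact enorm_tsum_le_tsum_enorm

end Fourier

section Inversion

variable {γ : ℝ}

theorem const_div_injective (hγ : γ ≠ 0) : Function.Injective (γ / · : ℝ → ℝ) := fun x y h ↦ by
  simpa [div_eq_mul_inv, hγ] using h

theorem const_div_image_Ioi_zero (hγ : 0 < γ) : (γ / ·) '' Ioi 0 = Ioi (0 : ℝ) := by
  refine Subset.antisymm (image_subset_iff.2 fun t ht ↦ div_pos hγ ht) fun x hx ↦ ?_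
  exact ⟨γ / x, div_pos hγ hx, div_div_cancel₀ hγ.ne'⟩

theorem const_div_image_Ioi (hγ : 0 < γ) {a : ℝ} (ha : 0 < a) :
    (γ / ·) '' Ioi a = Ioo 0 (γ / a) := by
  refine Subset.antisymm (image_subset_iff.2 fun t ht ↦ ?_) fun x hx ↦ ?_
  · exact ⟨div_pos hγ (ha.trans ht), div_lt_div_of_pos_left hγ ha ht⟩
  · exact ⟨γ / x, (lt_div_comm₀ ha hx.1).2 hx.2, div_div_cancel₀ hγ.ne'⟩

theorem hasDerivWithinAt_const_div_s1 {s : Set ℝ} (hs : s ⊆ Ioi 0) :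
    ∀ t ∈ s, HasDerivWithinAt (γ / ·) (-(γ / t ^ 2)) s t := fun t ht ↦ by
  simpa [div_eq_mul_inv] using ((hasDerivAt_inv (hs ht).ne').const_mul γ).hasDerivWithinAt

theorem lintegral_const_div_image (hγ : 0 < γ) {s : Set ℝ} (hs : MeasurableSet s) (hs0 : s ⊆ Ioi 0)
    (F : ℝ → ℝ≥0∞) :
    ∫⁻ x in (γ / ·) '' s, F x = ∫⁻ t in s, ENNReal.ofReal (γ / t ^ 2) * F (γ / t) := by
  rw [lintegral_image_eq_lintegral_abs_deriv_mul hs (hasDerivWithinAt_const_div_s1 hs0)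
    (const_div_injective hγ.ne').injOn]
  simp only [abs_neg, abs_of_nonneg (div_nonneg hγ.le (sq_nonneg _))]

variable {E : Type*} [NormedAddCommGroup E] [NormedSpace ℝ E]

theorem integral_Ioi_const_div (hγ : 0 < γ) (f : ℝ → E) :
    ∫ s in Ioi 0, (γ / s ^ 2) • f (γ / s) = ∫ t in Ioi 0, f t := by
  nth_rw 2 [← const_div_image_Ioi_zero hγ]
  rw [integral_image_eq_integral_abs_deriv_smul measurableSet_Ioi
    (hasDerivWithinAt_const_div_s1 subset_rfl) (const_div_injective hγ.ne').injOn]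
  simp only [abs_neg, abs_of_nonneg (div_nonneg hγ.le (sq_nonneg _))]

theorem integrableOn_Ioi_const_div_iff (hγ : 0 < γ) {f : ℝ → E} :
    IntegrableOn (fun s ↦ (γ / s ^ 2) • f (γ / s)) (Ioi 0) ↔ IntegrableOn f (Ioi 0) := by
  nth_rw 2 [← const_div_image_Ioi_zero hγ]
  rw [integrableOn_image_iff_integrableOn_abs_deriv_smul measurableSet_Ioi
    (hasDerivWithinAt_const_div_s1 subset_rfl) (const_div_injective hγ.ne').injOn]
  simp only [abs_neg, abs_of_nonneg (div_nonneg hγ.le (sq_nonneg _))]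

end Inversion

section GaussTransfer

variable {T γ : ℝ} {F : ℝ → ℝ≥0∞}

/-- The transfer operator of the Gauss-type map `y ↦ γ / y mod T` on `(0, γ / T)`: the sum over
the inverse branches `x ↦ γ / (x + (k + 1) * T)`, `k : ℕ`, weighted by the absolute
values of their derivatives. Values in `ℝ≥0∞` make the sum meaningful for every `F`. -/
noncomputable def gaussTransfer (T γ : ℝ) (F : ℝ → ℝ≥0∞) (x : ℝ) : ℝ≥0∞ :=
  ∑' k : ℕ, ENNReal.ofReal (γ / (x + (k + 1) * T) ^ 2) * F (γ / (x + (k + 1) * T))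

theorem Ioo_div_subset_Ioc (hT : 0 < T) (hγT : γ ≤ T ^ 2) : Ioo 0 (γ / T) ⊆ Ioc 0 T :=
  Ioo_subset_Ioc_self.trans (Ioc_subset_Ioc_right (by rwa [div_le_iff₀ hT, ← sq]))

theorem measurable_gaussTransfer (hF : Measurable F) : Measurable (gaussTransfer T γ F) :=
  .tsum fun k ↦ by fun_prop

theorem gaussTransfer_add (F G : ℝ → ℝ≥0∞) :
    gaussTransfer T γ (F + G) = gaussTransfer T γ F + gaussTransfer T γ G := by
  ext x
  simp only [gaussTransfer, Pi.add_apply, mul_add, ENNReal.tsum_add]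

theorem lintegral_mul_gaussTransfer [hT : Fact (0 < T)] (hγ : 0 < γ) {φ : AddCircle T → ℝ≥0∞}
    (hφ : Measurable φ) (hF : Measurable F) :
    ∫⁻ x in Ioc 0 T, φ x * gaussTransfer T γ F x =
      ∫⁻ y in Ioo 0 (γ / T), φ (γ / y : ℝ) * F y := by
  let G (t : ℝ) : ℝ≥0∞ := ENNReal.ofReal (γ / t ^ 2) * (φ t * F (γ / t))
  have hφ' : Measurable fun t : ℝ ↦ φ t := hφ.comp AddCircle.measurable_mk'
  have hG : Measurable G := by fun_prop
  have hexpand (x : ℝ) : φ x * gaussTransfer T γ F x = ∑' k : ℕ, G (x + (k * T + T)) := by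
    simp only [gaussTransfer, ← ENNReal.tsum_mul_left]
    congr with k
    have hcoe : ((x + (k * T + T) : ℝ) : AddCircle T) = x := by
      rw [← add_one_mul, ← Nat.cast_succ, coe_add_natCast_mul]
    simp only [G, hcoe, add_one_mul, mul_left_comm]
  calc ∫⁻ x in Ioc 0 T, φ x * gaussTransfer T γ F x
      = ∑' k : ℕ, ∫⁻ x in Ioc 0 T, G (x + (k * T + T)) := by
        simp only [hexpand]
        exact lintegral_tsum fun k ↦ by fun_prop
    _ = ∫⁻ t in Ioi T, G t := (lintegral_Ioi_eq_tsum hG.aemeasurable).symm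
    _ = ∫⁻ y in Ioo 0 (γ / T), φ (γ / y : ℝ) * F y := by
        rw [← const_div_image_Ioi hγ hT.out, lintegral_const_div_image hγ measurableSet_Ioi
          (Ioi_subset_Ioi hT.out.le)]
        simp only [G, div_div_cancel₀ hγ.ne']

theorem hasSum_inv_sub_inv_add_mul (hT : 0 < T) {u : ℝ} (hu : 0 < u) :
    HasSum (fun k : ℕ ↦ (u + k * T)⁻¹ - (u + (k + 1) * T)⁻¹) u⁻¹ := by
  refine (hasSum_iff_tendsto_nat_of_nonneg (fun k ↦ sub_nonneg.2 ?_) _).2 ?_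
  · gcongr
    linarith
  have htel (n : ℕ) : ∑ k ∈ Finset.range n, ((u + k * T)⁻¹ - (u + (k + 1) * T)⁻¹) =
      u⁻¹ - (u + n * T)⁻¹ := by
    simpa using Finset.sum_range_sub' (fun k : ℕ ↦ (u + k * T)⁻¹) n
  simp only [htel]
  simpa using tendsto_const_nhds.sub (tendsto_atTop_add_const_left _ u
    (tendsto_natCast_atTop_atTop.atTop_mul_const hT)).inv_tendsto_atTop

theorem gaussTransfer_inv_add (hT : 0 < T) (hγ : 0 < γ) {x : ℝ} (hx : 0 ≤ x) :
    gaussTransfer T γ (fun y ↦ ENNReal.ofReal (γ / T + y)⁻¹) x = ENNReal.ofReal (x + T)⁻¹ := by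
  have hterm (k : ℕ) : γ / (x + (k + 1) * T) ^ 2 * (γ / T + γ / (x + (k + 1) * T))⁻¹ =
      (x + T + k * T)⁻¹ - (x + T + (k + 1) * T)⁻¹ := by
    have : 0 < x + T + k * T := by positivity
    rw [show x + (k + 1) * T = x + T + k * T by ring,
      show x + T + (k + 1) * T = x + T + k * T + T by ring]
    field_simp
    ring
  have hsum := hasSum_inv_sub_inv_add_mul hT (u := x + T) (by positivity)
  rw [← hsum.tsum_eq, ENNReal.ofReal_tsum_of_nonneg _ hsum.summable]
  · refine tsum_congr fun k ↦ ?_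
    rw [← ENNReal.ofReal_mul (by positivity), hterm]
  · exact fun k ↦ by rw [← hterm]; positivity

theorem gaussTransfer_inv_add_lt (hT : 0 < T) (hγ : 0 < γ) (hγT : γ < T ^ 2) {x : ℝ} (hx : 0 ≤ x) :
    gaussTransfer T γ (fun y ↦ ENNReal.ofReal (γ / T + y)⁻¹) x < ENNReal.ofReal (γ / T + x)⁻¹ := by
  have hγT' : γ / T < T := by rwa [div_lt_iff₀ hT, ← sq]
  rw [gaussTransfer_inv_add hT hγ hx, add_comm (γ / T)]
  refine (ENNReal.ofReal_lt_ofReal_iff (by positivity)).2 ?_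
  gcongr

theorem ae_notMem_of_const_div_invariant [hT : Fact (0 < T)] (hγ : 0 < γ) (hγT : γ < T ^ 2)
    {s : Set (AddCircle T)} (hs : MeasurableSet s)
    (hinv : ∀ᵐ x : ℝ ∂volume.restrict (Ioc 0 T), (x : AddCircle T) ∈ s →
      x < γ / T ∧ ((γ / x : ℝ) : AddCircle T) ∈ s) :
    ∀ᵐ x : ℝ ∂volume.restrict (Ioc 0 T), (x : AddCircle T) ∉ s := by
  let φ : AddCircle T → ℝ≥0∞ := s.indicator 1
  have hφ : Measurable φ := measurable_one.indicator hs
  have hφ' : Measurable fun x : ℝ ↦ φ x := hφ.comp AddCircle.measurable_mk'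
  let w (y : ℝ) : ℝ≥0∞ := ENNReal.ofReal (γ / T + y)⁻¹
  have hw : Measurable w := by fun_prop
  have hle : ∫⁻ x in Ioc 0 T, φ x * w x ≤ ∫⁻ x in Ioc 0 T, φ x * gaussTransfer T γ w x := by
    rw [lintegral_mul_gaussTransfer hγ hφ hw,
      ← Measure.restrict_restrict_of_subset (Ioo_div_subset_Ioc hT.out hγT.le),
      ← lintegral_indicator measurableSet_Ioo]
    refine lintegral_mono_ae ?_
    filter_upwards [hinv, ae_restrict_mem measurableSet_Ioc] with x hxs hx
    by_cases hmem : (x : AddCircle T) ∈ s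
    · have hxI : x ∈ Ioo 0 (γ / T) := ⟨hx.1, (hxs hmem).1⟩
      rw [indicator_of_mem hxI]
      simp [φ, hmem, (hxs hmem).2]
    · simp [φ, hmem]
  have hfin : ∫⁻ x in Ioc 0 T, φ x * gaussTransfer T γ w x ≠ ∞ := by
    refine ne_of_lt (setLIntegral_lt_top_of_le_nnreal (by simp) ⟨T⁻¹.toNNReal, fun x hx ↦ ?_⟩)
    rw [gaussTransfer_inv_add hT.out hγ hx.1.le]
    calc φ x * ENNReal.ofReal (x + T)⁻¹ ≤ 1 * ENNReal.ofReal T⁻¹ := by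
          gcongr
          · exact indicator_le_self s 1 _
          · exact hT.out
          · exact le_add_of_nonneg_left hx.1.le
      _ = T⁻¹.toNNReal := one_mul _
  have hge := ae_restrict_of_forall_mem (μ := volume) measurableSet_Ioc fun x (hx : x ∈ Ioc 0 T) ↦
    mul_le_mul_right (gaussTransfer_inv_add_lt hT.out hγ hγT hx.1.le).le (φ x)
  have heq := ae_eq_of_ae_le_of_lintegral_le hge hfin (by fun_prop) hle
  filter_upwards [heq, ae_restrict_mem measurableSet_Ioc] with x hx hxT hmem
  simp only [φ, indicator_of_mem hmem, Pi.one_apply, one_mul] at hx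
  exact (gaussTransfer_inv_add_lt hT.out hγ hγT hxT.1.le).ne hx

theorem lintegral_gaussTransfer [Fact (0 < T)] (hγ : 0 < γ) (hF : Measurable F) :
    ∫⁻ x in Ioc 0 T, gaussTransfer T γ F x = ∫⁻ y in Ioo 0 (γ / T), F y := by
  simpa only [Pi.one_apply, one_mul] using
    lintegral_mul_gaussTransfer (T := T) hγ measurable_one hF

theorem ae_eq_gaussTransfer_of_ae_le [hT : Fact (0 < T)] (hγ : 0 < γ) (hγT : γ ≤ T ^ 2)
    (hF : Measurable F) (hfin : ∫⁻ x in Ioc 0 T, F x ≠ ∞)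
    (hle : F ≤ᵐ[volume.restrict (Ioc 0 T)] gaussTransfer T γ F) :
    F =ᵐ[volume.restrict (Ioc 0 T)] gaussTransfer T γ F :=
  ae_eq_of_ae_le_of_lintegral_le hle hfin (measurable_gaussTransfer hF).aemeasurable <|
    (lintegral_gaussTransfer hγ hF).trans_le (lintegral_mono_set (Ioo_div_subset_Ioc hT.out hγT))

theorem ae_lt_div_of_ae_le_gaussTransfer [hT : Fact (0 < T)] (hγ : 0 < γ) (hγT : γ ≤ T ^ 2)
    (hF : Measurable F) (hfin : ∫⁻ x in Ioc 0 T, F x ≠ ∞)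
    (hle : F ≤ᵐ[volume.restrict (Ioc 0 T)] gaussTransfer T γ F) :
    ∀ᵐ x ∂volume.restrict (Ioc 0 T), F x ≠ 0 → x < γ / T := by
  have hsub := Ioo_div_subset_Ioc hT.out hγT
  have hmass : ∫⁻ x in Ioc 0 T, (Ioo 0 (γ / T)).indicator F x = ∫⁻ y in Ioo 0 (γ / T), F y := by
    rw [lintegral_indicator measurableSet_Ioo, Measure.restrict_restrict_of_subset hsub]
  have hind : (Ioo 0 (γ / T)).indicator F =ᵐ[volume.restrict (Ioc 0 T)] F := by
    refine ae_eq_of_ae_le_of_lintegral_le (.of_forall (indicator_le_self _ F)) ?_ hF.aemeasurable ?_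
    · exact hmass.trans_ne ((lintegral_mono_set hsub).trans_lt hfin.lt_top).ne
    · exact (lintegral_mono_ae hle).trans_eq ((lintegral_gaussTransfer hγ hF).trans hmass.symm)
  filter_upwards [hind] with x hx hFx
  rw [← hx] at hFx
  exact (mem_of_indicator_ne_zero hFx).2

theorem ae_const_div_mem_of_ae_eq_gaussTransfer [Fact (0 < T)] (hγ : 0 < γ) (hF : Measurable F)
    (heq : F =ᵐ[volume.restrict (Ioc 0 T)] gaussTransfer T γ F) {s : Set (AddCircle T)}
    (hs : MeasurableSet s)
    (hFs : ∀ᵐ x : ℝ ∂volume.restrict (Ioc 0 T), F x ≠ 0 → (x : AddCircle T) ∈ s) :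
    ∀ᵐ y : ℝ ∂volume.restrict (Ioo 0 (γ / T)), F y ≠ 0 → ((γ / y : ℝ) : AddCircle T) ∈ s := by
  let φ : AddCircle T → ℝ≥0∞ := sᶜ.indicator 1
  have hφ : Measurable φ := measurable_one.indicator hs.compl
  have hφ' : Measurable fun x : ℝ ↦ φ x := hφ.comp AddCircle.measurable_mk'
  have hzero : ∫⁻ y in Ioo 0 (γ / T), φ (γ / y : ℝ) * F y = 0 := by
    rw [← lintegral_mul_gaussTransfer hγ hφ hF, ← lintegral_zero]
    refine lintegral_congr_ae ?_
    filter_upwards [heq, hFs] with x hx hxs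
    by_cases hFx : F x = 0
    · simp [← hx, hFx]
    · simp [φ, hxs hFx]
  filter_upwards [(lintegral_eq_zero_iff (by fun_prop)).1 hzero] with y hy hFy
  simpa [φ, hFy] using hy

theorem ae_eq_zero_of_ae_le_gaussTransfer [hT : Fact (0 < T)] (hγ : 0 < γ) (hγT : γ < T ^ 2)
    (hF : Measurable F) (hfin : ∫⁻ x in Ioc 0 T, F x ≠ ∞)
    (hle : F ≤ᵐ[volume.restrict (Ioc 0 T)] gaussTransfer T γ F) :
    F =ᵐ[volume.restrict (Ioc 0 T)] 0 := by
  have heq := ae_eq_gaussTransfer_of_ae_le hγ hγT.le hF hfin hle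
  have hlt := ae_lt_div_of_ae_le_gaussTransfer hγ hγT.le hF hfin hle
  let s : Set (AddCircle T) := {z | F (AddCircle.equivIoc T 0 z) ≠ 0}
  have hs : MeasurableSet s :=
    (hF.comp (measurable_subtype_coe.comp (AddCircle.measurableEquivIoc T 0).measurable))
      (measurableSet_singleton 0).compl
  have hmem {x : ℝ} (hx : x ∈ Ioc 0 T) : (x : AddCircle T) ∈ s ↔ F x ≠ 0 := by
    rw [mem_ofPred_eq, AddCircle.equivIoc_coe_of_mem (by rwa [zero_add])]
  have hinv : ∀ᵐ x : ℝ ∂volume.restrict (Ioc 0 T), (x : AddCircle T) ∈ s →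
      x < γ / T ∧ ((γ / x : ℝ) : AddCircle T) ∈ s := by
    have hdiv := ae_const_div_mem_of_ae_eq_gaussTransfer hγ hF heq hs
      (ae_restrict_of_forall_mem measurableSet_Ioc fun x hx ↦ (hmem hx).2)
    rw [ae_restrict_iff' measurableSet_Ioo] at hdiv
    filter_upwards [hlt, ae_restrict_of_ae hdiv, ae_restrict_mem measurableSet_Ioc]
      with x hxlt hxdiv hx hxs
    have hFx := (hmem hx).1 hxs
    exact ⟨hxlt hFx, hxdiv ⟨hx.1, hxlt hFx⟩ hFx⟩
  filter_upwards [ae_notMem_of_const_div_invariant hγ hγT hs hinv,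
    ae_restrict_mem measurableSet_Ioc] with x hxs hx
  simpa [hmem hx] using hxs

end GaussTransfer

section Uniqueness

variable {γ : ℝ} {E : Type*} [NormedAddCommGroup E]

/-- The density in the variable `s = γ / t` of the measure `f t dt` on the half-line. -/
noncomputable def inversionDensity [NormedSpace ℝ E] (γ : ℝ) (f : ℝ → E) (s : ℝ) : E :=
  (γ / s ^ 2) • f (γ / s)

theorem stronglyMeasurable_inversionDensity [NormedSpace ℝ E] {f : ℝ → E}
    (hf : StronglyMeasurable f) : StronglyMeasurable (inversionDensity γ f) :=
  .smul (by fun_prop) (hf.comp_measurable (by fun_prop))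

theorem inversionDensity_inversionDensity [NormedSpace ℝ E] (hγ : γ ≠ 0) (f : ℝ → E) {t : ℝ}
    (ht : t ≠ 0) : inversionDensity γ (inversionDensity γ f) t = f t := by
  simp only [inversionDensity, smul_smul, div_div_cancel₀ hγ]
  rw [show γ / t ^ 2 * (γ / (γ / t) ^ 2) = 1 by field_simp, one_smul]

theorem enorm_inversionDensity [NormedSpace ℝ E] (hγ : 0 ≤ γ) (f : ℝ → E) (s : ℝ) :
    ‖inversionDensity γ f s‖ₑ = ENNReal.ofReal (γ / s ^ 2) * ‖f (γ / s)‖ₑ := by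
  rw [inversionDensity, enorm_smul, Real.enorm_of_nonneg (by positivity)]

theorem gaussTransfer_enorm [NormedSpace ℝ E] (T : ℝ) (hγ : 0 ≤ γ) (f : ℝ → E) (x : ℝ) :
    gaussTransfer T γ (‖f ·‖ₑ) x = ∑' k : ℕ, ‖inversionDensity γ f (x + (k + 1) * T)‖ₑ := by
  simp only [gaussTransfer, enorm_inversionDensity hγ]

theorem gaussTransfer_enorm_inversionDensity [NormedSpace ℝ E] {T : ℝ} (hT : 0 < T) (hγ : 0 < γ)
    (f : ℝ → E) {x : ℝ} (hx : 0 < x) :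
    gaussTransfer T γ (‖inversionDensity γ f ·‖ₑ) x = ∑' k : ℕ, ‖f (x + (k + 1) * T)‖ₑ := by
  rw [gaussTransfer_enorm T hγ.le]
  refine tsum_congr fun k ↦ ?_
  rw [inversionDensity_inversionDensity hγ.ne' f (by positivity)]

theorem lintegral_enorm_inversionDensity [NormedSpace ℝ E] (hγ : 0 < γ) {a : ℝ} (ha : 0 < a)
    (f : ℝ → E) :
    ∫⁻ s in Ioo 0 (γ / a), ‖inversionDensity γ f s‖ₑ = ∫⁻ t in Ioi a, ‖f t‖ₑ := by
  rw [← const_div_image_Ioi hγ ha, lintegral_const_div_image hγ measurableSet_Ioi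
    (Ioi_subset_Ioi ha.le)]
  refine setLIntegral_congr_fun measurableSet_Ioi fun t ht ↦ ?_
  rw [← enorm_inversionDensity hγ.le, inversionDensity_inversionDensity hγ.ne' f (ha.trans ht).ne']

variable [NormedSpace ℂ E]

theorem integral_smul_inversionDensity (hγ : 0 < γ) (c : ℝ → ℂ) (f : ℝ → E) :
    ∫ s in Ioi 0, c s • inversionDensity γ f s = ∫ t in Ioi 0, c (γ / t) • f t := by
  rw [← integral_Ioi_const_div hγ fun t ↦ c (γ / t) • f t]
  refine integral_congr_ae (.of_forall fun s ↦ ?_)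
  simp only [inversionDensity, div_div_cancel₀ hγ.ne', smul_comm (c s)]

variable [CompleteSpace E] {T : ℝ} [hT : Fact (0 < T)] {f : ℝ → E}

theorem ae_enorm_add_enorm_inversionDensity_le_gaussTransfer (hγ : 0 < γ)
    (hf : IntegrableOn f (Ioi 0))
    (h : ∀ n : ℤ, ∫ t in Ioi (0 : ℝ), fourier n (t : AddCircle T) • f t = 0)
    (hinv : ∀ n : ℤ, ∫ t in Ioi (0 : ℝ), fourier n ((γ / t : ℝ) : AddCircle T) • f t = 0) :
    (fun x ↦ ‖f x‖ₑ + ‖inversionDensity γ f x‖ₑ) ≤ᵐ[volume.restrict (Ioc 0 T)]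
      gaussTransfer T γ fun x ↦ ‖f x‖ₑ + ‖inversionDensity γ f x‖ₑ := by
  have hle := ae_enorm_le_tsum_enorm_of_integral_fourier_smul_eq_zero hf h
  have hle' := ae_enorm_le_tsum_enorm_of_integral_fourier_smul_eq_zero (T := T)
    ((integrableOn_Ioi_const_div_iff hγ).2 hf)
    fun n ↦ (integral_smul_inversionDensity hγ _ f).trans (hinv n)
  filter_upwards [hle, hle', ae_restrict_mem measurableSet_Ioc] with x hx hx' hxT
  rw [← gaussTransfer_enorm_inversionDensity hT.out hγ f hxT.1] at hx
  calc ‖f x‖ₑ + ‖inversionDensity γ f x‖ₑ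
      ≤ gaussTransfer T γ (‖inversionDensity γ f ·‖ₑ) x + gaussTransfer T γ (‖f ·‖ₑ) x :=
        add_le_add hx (hx'.trans_eq (gaussTransfer_enorm T hγ.le f x).symm)
    _ = gaussTransfer T γ (fun x ↦ ‖f x‖ₑ + ‖inversionDensity γ f x‖ₑ) x := by
        rw [add_comm]
        exact (congrFun (gaussTransfer_add (‖f ·‖ₑ) (‖inversionDensity γ f ·‖ₑ)) x).symm

theorem ae_Ioi_eq_zero_of_stronglyMeasurable_of_integral_fourier_smul_eq_zero (hγ : 0 < γ)
    (hγT : γ < T ^ 2) (hfm : StronglyMeasurable f) (hf : IntegrableOn f (Ioi 0))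
    (h : ∀ n : ℤ, ∫ t in Ioi (0 : ℝ), fourier n (t : AddCircle T) • f t = 0)
    (hinv : ∀ n : ℤ, ∫ t in Ioi (0 : ℝ), fourier n ((γ / t : ℝ) : AddCircle T) • f t = 0) :
    ∀ᵐ t ∂volume.restrict (Ioi 0), f t = 0 := by
  have hg : IntegrableOn (inversionDensity γ f) (Ioi 0) := (integrableOn_Ioi_const_div_iff hγ).2 hf
  have hfin : ∫⁻ x in Ioc 0 T, (‖f x‖ₑ + ‖inversionDensity γ f x‖ₑ) ≠ ∞ := by
    rw [lintegral_add_left hfm.enorm]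
    exact ENNReal.add_ne_top.2 ⟨(hf.mono_set Ioc_subset_Ioi_self).2.ne,
      (hg.mono_set Ioc_subset_Ioi_self).2.ne⟩
  have hzero := ae_eq_zero_of_ae_le_gaussTransfer hγ hγT
    (hfm.enorm.add (stronglyMeasurable_inversionDensity hfm).enorm) hfin
    (ae_enorm_add_enorm_inversionDensity_le_gaussTransfer hγ hf h hinv)
  have hsub := Ioo_div_subset_Ioc hT.out hγT.le
  rw [← Ioc_union_Ioi_eq_Ioi hT.out.le, ae_restrict_union_iff]
  constructor
  · filter_upwards [hzero] with x hx
    exact enorm_eq_zero.1 (add_eq_zero.1 hx).1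
  · have hmass : ∫⁻ t in Ioi T, ‖f t‖ₑ = 0 := by
      rw [← lintegral_enorm_inversionDensity hγ hT.out]
      refine lintegral_eq_zero_of_ae_eq_zero (ae_restrict_of_ae_restrict_of_subset hsub ?_)
      filter_upwards [hzero] with s hs
      exact (add_eq_zero.1 hs).2
    filter_upwards [(lintegral_eq_zero_iff hfm.enorm).1 hmass] with t ht
    exact enorm_eq_zero.1 ht

theorem ae_Ioi_eq_zero_of_integral_fourier_smul_eq_zero
    (hγ : 0 < γ) (hγT : γ < T ^ 2) (hf : IntegrableOn f (Ioi 0))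
    (h : ∀ n : ℤ, ∫ t in Ioi (0 : ℝ), fourier n (t : AddCircle T) • f t = 0)
    (hinv : ∀ n : ℤ, ∫ t in Ioi (0 : ℝ), fourier n ((γ / t : ℝ) : AddCircle T) • f t = 0) :
    ∀ᵐ t ∂volume.restrict (Ioi 0), f t = 0 := by
  have hmk := hf.1.ae_eq_mk
  have hcongr (c : ℝ → ℂ) : ∫ t in Ioi 0, c t • hf.1.mk f t = ∫ t in Ioi 0, c t • f t := by
    refine integral_congr_ae ?_
    filter_upwards [hmk] with t ht
    rw [ht]
  filter_upwards [hmk, ae_Ioi_eq_zero_of_stronglyMeasurable_of_integral_fourier_smul_eq_zero hγ hγT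
    hf.1.stronglyMeasurable_mk (hf.congr hmk) (fun n ↦ (hcongr _).trans (h n))
    fun n ↦ (hcongr _).trans (hinv n)] with t ht hzero
  rw [ht, hzero]

end Uniqueness

end

theorem stmt_1_general {E : Type*} [NormedAddCommGroup E] [NormedSpace ℂ E] [CompleteSpace E]
    (α β : ℝ) (hα : 0 < α) (hβ : 0 < β) (hsub : α * β < 4)
    (f : ℝ → E) (hf : IntegrableOn f (Set.Ioi 0))
    (h1 : ∀ m : ℤ, ∫ t in Set.Ioi (0:ℝ), Complex.exp (Complex.I * π * α * m * t) • f t = 0)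
    (h2 : ∀ n : ℤ, ∫ t in Set.Ioi (0:ℝ), Complex.exp (-(Complex.I * π * β * n) / t) • f t = 0) :
    ∀ᵐ t ∂(volume.restrict (Set.Ioi (0:ℝ))), f t = 0 := by
  have : Fact (0 < 2 / α) := ⟨by positivity⟩
  have hα' : (α : ℂ) ≠ 0 := mod_cast hα.ne'
  have hγ : β / α < (2 / α) ^ 2 := by
    rw [div_pow, div_lt_div_iff₀ hα (by positivity)]
    nlinarith
  refine ae_Ioi_eq_zero_of_integral_fourier_smul_eq_zero
    (div_pos hβ hα) hγ hf (fun n ↦ ?_) fun n ↦ ?_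
  · rw [← h1 n]
    congr with t
    rw [fourier_coe_apply]
    congr 2
    push_cast
    field_simp
  · rw [← h2 (-n)]
    congr with t
    rw [fourier_coe_apply]
    congr 2
    push_cast
    field_simp

/-- Subcritical regime `αβ < 4` for one branch of the hyperbola: the
lattice-cross is a uniqueness set for `L¹` densities on the half-line. -/
theorem stmt_1 (α β : ℝ) (hα : 0 < α) (hβ : 0 < β) (hsub : α * β < 4)
    (f : ℝ → ℂ) (hf : IntegrableOn f (Set.Ioi 0))
    (h1 : ∀ m : ℤ, ∫ t in Set.Ioi (0:ℝ), Complex.exp (Complex.I * π * α * m * t) * f t = 0)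
    (h2 : ∀ n : ℤ, ∫ t in Set.Ioi (0:ℝ), Complex.exp (-(Complex.I * π * β * n) / t) * f t = 0) :
    ∀ᵐ t ∂(volume.restrict (Set.Ioi (0:ℝ))), f t = 0 :=
  stmt_1_general α β hα hβ hsub f hf h1 h2
end
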